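/- arXiv:2301.03763 — 6 statements merged into one kernel-verified Lean document; each statement's English description precedes it below -/
import Mathlib

section
/- There is an absolute constant c₀ > 0 with the following property. Let k ∈ {1,…,n}, α' ∈ (0,1), δ ≤ 1/(16k), and let p, p̃ ∈ Δ^n satisfy ‖p̃ − p‖₁ ≤ δ. Draw N ≥ c₀ · k · log(n/α') i.i.d. samples from p̃ and let q̃ ∈ Δ^n be the empirical distribution of these samples. Define B := {j ∈ [n] : q̃_j ≥ 1/(2k)} and set q_j := 18 q̃_j for j ∈ B and q_j := 18/k for j ∉ B. Then with probability at least 1 − α', both ‖q‖₁ ≤ 18(1 + n/k) and q_j ≥ 9 p_j for all j ∈ [n] (hence q entrywise dominates every distribution p' ∈ Δ^n satisfying p' ≤ 9p entrywise). -/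
/-!
The bound on `‖q‖₁` holds for every sample, since `q_j ≤ 18 q̃_j + 18/k` and `∑ q̃_j ≤ 1`.
Domination can fail at `j` only if `p_j > 1/k` and `q̃_j < p_j/2` (`heavy_of_not_dominated`).
For each such heavy `j` a Chernoff bound is applied with the exponential weight `2^(-count)`:
its expectation factorises over the samples and equals `(1 - p̃_j/2)^N ≤ exp(-N p̃_j/2)`
(`sum_weight_chernoff`). As `p̃_j ≥ p_j - 1/(16k)` and `log 2 < 0.6932`, the failure probability
at `j` is at most `exp(-N/(10k)) ≤ α'/n`, so `c₀ = 10` works and a union bound over `j` concludes.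
-/

noncomputable section

/-- membership in the probability simplex Δ^k -/
def IsSimplex {k : ℕ} (u : Fin k → ℝ) : Prop :=
  (∀ i, 0 ≤ u i) ∧ ∑ i, u i = 1

/-- the empirical distribution of `N` samples `ω : Fin N → Fin n` -/
def empDist {n N : ℕ} (ω : Fin N → Fin n) : Fin n → ℝ :=
  fun j => ((Finset.univ.filter fun s => ω s = j).card : ℝ) / N

/-- the hint vector built from the empirical distribution: `q_j = 18 q̃_j` on
`B = {j : q̃_j ≥ 1/(2k)}` and `q_j = 18/k` off `B` -/
def hintVec {n N : ℕ} (k : ℕ) (ω : Fin N → Fin n) : Fin n → ℝ :=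
  fun j => if 1 / (2 * (k : ℝ)) ≤ empDist ω j then 18 * empDist ω j else 18 / (k : ℝ)

lemma sum_empDist_le_one {n N : ℕ} (ω : Fin N → Fin n) : ∑ j, empDist ω j ≤ 1 := by
  have h : ∑ j, (Finset.univ.filter fun s => ω s = j).card = N := by
    have := Finset.card_eq_sum_card_fiberwise (f := ω) (s := Finset.univ) (t := Finset.univ)
      (fun _ _ => by simp)
    simpa using this.symm
  unfold empDist
  rw [← Finset.sum_div, ← Nat.cast_sum, h]
  exact div_self_le_one _

lemma empDist_nonneg {n N : ℕ} (ω : Fin N → Fin n) (j : Fin n) : 0 ≤ empDist ω j := by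
  unfold empDist; positivity

lemma sum_abs_hintVec_le {n N : ℕ} (k : ℕ) (ω : Fin N → Fin n) :
    ∑ j, |hintVec k ω j| ≤ 18 * (1 + (n : ℝ) / (k : ℝ)) := by
  have h : ∀ j, |hintVec k ω j| ≤ 18 * empDist ω j + 18 / (k : ℝ) := by
    intro j
    have h1 := empDist_nonneg ω j
    have h2 : 0 ≤ 18 / (k : ℝ) := by positivity
    unfold hintVec
    split_ifs
    · rw [abs_of_nonneg (by positivity)]; linarith
    · rw [abs_of_nonneg h2]; linarith
  calc ∑ j, |hintVec k ω j| ≤ ∑ j, (18 * empDist ω j + 18 / (k : ℝ)) :=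
        Finset.sum_le_sum fun j _ => h j
    _ = 18 * ∑ j, empDist ω j + n * (18 / (k : ℝ)) := by
        rw [Finset.sum_add_distrib, ← Finset.mul_sum]; simp
    _ ≤ 18 * 1 + n * (18 / (k : ℝ)) := by gcongr; exact sum_empDist_le_one ω
    _ = _ := by ring

/-- A coordinate at which domination fails is heavy under `p` and undersampled by a factor
of two; this covers both branches of the definition of `hintVec`. -/
lemma heavy_of_not_dominated {n N k : ℕ} (hk : 1 ≤ k) (ω : Fin N → Fin n) (j : Fin n) {x : ℝ}
    (h : hintVec k ω j < 9 * x) : 1 / (k : ℝ) < x ∧ empDist ω j < x / 2 := by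
  have hk' : (0 : ℝ) < 1 / k := by positivity
  have e1 : 1 / (2 * (k : ℝ)) = 1 / k / 2 := by ring
  have e2 : 18 / (k : ℝ) = 18 * (1 / k) := by ring
  unfold hintVec at h
  rw [e1, e2] at h
  split_ifs at h with hB
  · constructor <;> linarith
  · push Not at hB
    constructor <;> linarith

/-- The moment generating function of the count of `j` under i.i.d. sampling from `u`, evaluated
at `-log 2`: each sample contributes a factor `1 - u j / 2`. -/
lemma sum_weight_chernoff {n N : ℕ} {u : Fin n → ℝ} (hu : IsSimplex u) (j : Fin n) :
    ∑ ω : Fin N → Fin n, (∏ s, u (ω s)) *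
      Real.exp (-(Real.log 2 * ((Finset.univ.filter fun s => ω s = j).card : ℝ)))
      ≤ Real.exp (-(N * u j / 2)) := by
  have h1 : ∀ ω : Fin N → Fin n, (∏ s, u (ω s)) *
      Real.exp (-(Real.log 2 * ((Finset.univ.filter fun s => ω s = j).card : ℝ)))
      = ∏ s, (u (ω s) * if ω s = j then (1 / 2 : ℝ) else 1) := by
    intro ω
    rw [Finset.prod_mul_distrib, Finset.prod_ite]
    have : Real.exp (-(Real.log 2 * ((Finset.univ.filter fun s => ω s = j).card : ℝ)))
        = (1 / 2 : ℝ) ^ (Finset.univ.filter fun s => ω s = j).card := by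
      rw [mul_comm, ← mul_neg, Real.exp_nat_mul, Real.exp_neg, Real.exp_log (by norm_num)]
      norm_num
    rw [this]; simp
  have h2 : ∑ i, (u i * if i = j then (1 / 2 : ℝ) else 1) = 1 - u j / 2 := by
    have : ∀ i, (u i * if i = j then (1 / 2 : ℝ) else 1) = u i - if i = j then u i / 2 else 0 := by
      intro i; split_ifs <;> ring
    simp_rw [this]
    rw [Finset.sum_sub_distrib, hu.2]; simp
  have h3 : u j ≤ 1 := by
    rw [← hu.2]; exact Finset.single_le_sum (fun i _ => hu.1 i) (Finset.mem_univ j)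
  simp_rw [h1]
  rw [← Fintype.sum_pow (fun i => u i * if i = j then (1 / 2 : ℝ) else 1) N, h2]
  calc (1 - u j / 2) ^ N ≤ Real.exp (-(u j / 2)) ^ N := by
        apply pow_le_pow_left₀ (by linarith)
        linarith [Real.add_one_le_exp (-(u j / 2))]
    _ = _ := by rw [← Real.exp_nat_mul]; congr 1; ring


/-- With `N ≥ c₀ k log(n/α')` i.i.d. samples from `p̃` (with
`‖p̃ - p‖₁ ≤ δ ≤ 1/(16k)`), the hint vector `q` satisfies, with probability `≥ 1 - α'`,
both `‖q‖₁ ≤ 18(1 + n/k)` and `q_j ≥ 9 p_j` for all `j`. The probability is expressed over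
the sample space `Fin N → Fin n` with product mass `∏ₛ p̃(ωₛ)`. -/
theorem stmt2 : ∃ c₀ : ℝ, 0 < c₀ ∧
    ∀ (n k : ℕ), 1 ≤ k → k ≤ n →
    ∀ (α' δ : ℝ), α' ∈ Set.Ioo (0:ℝ) 1 → δ ≤ 1 / (16 * (k : ℝ)) →
    ∀ (p ptilde : Fin n → ℝ), IsSimplex p → IsSimplex ptilde →
    (∑ j, |ptilde j - p j|) ≤ δ →
    ∀ N : ℕ, c₀ * k * Real.log (n / α') ≤ (N : ℝ) →
    1 - α' ≤ ∑ ω : Fin N → Fin n,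
      Set.indicator
        {ω : Fin N → Fin n |
          (∑ j, |hintVec k ω j|) ≤ 18 * (1 + (n : ℝ) / (k : ℝ)) ∧
          ∀ j, 9 * p j ≤ hintVec k ω j}
        (fun ω => ∏ s, ptilde (ω s)) ω := by
  refine ⟨10, by norm_num, ?_⟩
  intro n k hk hkn α' δ hα hδ p u hp hu hpu N hN
  have hk0 : (0 : ℝ) < k := by exact_mod_cast hk
  have hn1 : (1 : ℝ) ≤ n := by exact_mod_cast hk.trans hkn
  have hnα : 1 < (n : ℝ) / α' := by rw [lt_div_iff₀ hα.1]; linarith [hα.2]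
  have hN0 : (0 : ℝ) < N :=
    lt_of_lt_of_le (mul_pos (by positivity) (Real.log_pos hnα)) hN
  set L := Real.log 2 with hL
  have hL0 : 0 < L := Real.log_pos (by norm_num)
  have hL1 : L < 0.6932 := by have := Real.log_two_lt_d9; linarith
  let c : (Fin N → Fin n) → Fin n → ℝ :=
    fun ω j => ((Finset.univ.filter fun s => ω s = j).card : ℝ)
  let S : Finset (Fin n) := Finset.univ.filter fun j => 1 / (k : ℝ) < p j
  let W : (Fin N → Fin n) → ℝ := fun ω => ∏ s, u (ω s)
  let T : (Fin N → Fin n) → Fin n → ℝ := fun ω j => Real.exp (L * (N * p j / 2)) *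
    (W ω * Real.exp (-(L * c ω j)))
  have hW : ∀ ω, 0 ≤ W ω := fun ω => Finset.prod_nonneg fun s _ => hu.1 _
  have hT : ∀ ω j, 0 ≤ T ω j := fun ω j =>
    mul_nonneg (Real.exp_pos _).le (mul_nonneg (hW ω) (Real.exp_pos _).le)
  have hWsum : ∑ ω, W ω = 1 := by
    change ∑ ω : Fin N → Fin n, ∏ s, u (ω s) = 1
    rw [← Fintype.sum_pow u N, hu.2, one_pow]
  have hTsum : ∀ j ∈ S, ∑ ω, T ω j ≤ α' / n := by
    intro j hj
    have hj' : 1 / (k : ℝ) < p j := (Finset.mem_filter.mp hj).2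
    have hclose : |u j - p j| ≤ 1 / (16 * (k : ℝ)) :=
      ((Finset.single_le_sum (f := fun i => |u i - p i|) (fun i _ => abs_nonneg _)
        (Finset.mem_univ j)).trans hpu).trans hδ
    have hu' : p j - 1 / k / 16 ≤ u j := by
      have e : 1 / (16 * (k : ℝ)) = 1 / k / 16 := by ring
      rw [e] at hclose
      linarith [(abs_le.mp hclose).1]
    have hrate : L * p j / 2 - u j / 2 ≤ -(1 / k / 10) := by
      have : 0 < 1 / (k : ℝ) := by positivity
      nlinarith
    have hlog : Real.log (n / α') ≤ N * (1 / k / 10) := by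
      have : N * (1 / (k : ℝ) / 10) = N / (10 * k) := by field_simp
      rw [this, le_div_iff₀ (by positivity)]
      linarith
    calc ∑ ω, T ω j
        = Real.exp (L * (N * p j / 2)) * ∑ ω, W ω * Real.exp (-(L * c ω j)) := by
          rw [Finset.mul_sum]
      _ ≤ Real.exp (L * (N * p j / 2)) * Real.exp (-(N * u j / 2)) := by
          gcongr; exact sum_weight_chernoff hu j
      _ = Real.exp (N * (L * p j / 2 - u j / 2)) := by
          rw [← Real.exp_add]; congr 1; ring
      _ ≤ Real.exp (-Real.log (n / α')) := by
          apply Real.exp_le_exp.mpr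
          have := mul_le_mul_of_nonneg_left hrate hN0.le
          linarith
      _ = α' / n := by
          rw [Real.exp_neg, Real.exp_log (by linarith), inv_div]
  -- Markov's inequality and the union bound, in pointwise form.
  have key : ∀ ω : Fin N → Fin n, W ω - ∑ j ∈ S, T ω j ≤
      Set.indicator
        {ω : Fin N → Fin n |
          (∑ j, |hintVec k ω j|) ≤ 18 * (1 + (n : ℝ) / (k : ℝ)) ∧
          ∀ j, 9 * p j ≤ hintVec k ω j} W ω := by
    intro ω
    by_cases hω : ∀ j, 9 * p j ≤ hintVec k ω j
    · rw [Set.indicator_of_mem (by exact ⟨sum_abs_hintVec_le k ω, hω⟩)]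
      linarith [Finset.sum_nonneg fun j (_ : j ∈ S) => hT ω j]
    · rw [Set.indicator_of_notMem (by exact fun h => hω h.2)]
      push Not at hω
      obtain ⟨j, hj⟩ := hω
      obtain ⟨h1, h2⟩ := heavy_of_not_dominated hk ω j hj
      have hjS : j ∈ S := Finset.mem_filter.mpr ⟨Finset.mem_univ j, h1⟩
      have hc : c ω j ≤ N * p j / 2 := by
        have : c ω j / N < p j / 2 := h2
        rw [div_lt_iff₀ hN0] at this
        linarith
      have hWT : W ω ≤ T ω j := by
        have e : T ω j = W ω * Real.exp (L * (N * p j / 2 - c ω j)) := by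
          change Real.exp _ * (W ω * Real.exp _) = _
          rw [mul_left_comm, ← Real.exp_add]; congr 2; ring
        rw [e]
        exact le_mul_of_one_le_right (hW ω)
          (Real.one_le_exp (mul_nonneg hL0.le (by linarith)))
      linarith [Finset.single_le_sum (fun i _ => hT ω i) hjS]
  calc 1 - α' ≤ ∑ ω, W ω - ∑ j ∈ S, ∑ ω, T ω j := by
        have h1 : ∑ j ∈ S, ∑ ω, T ω j ≤ S.card • (α' / n) :=
          Finset.sum_le_card_nsmul S _ _ hTsum
        have h2 : (S.card : ℝ) ≤ n := by
          have := Finset.card_le_univ S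
          rw [Fintype.card_fin] at this
          exact_mod_cast this
        have h3 : (S.card : ℝ) * (α' / n) ≤ n * (α' / n) :=
          mul_le_mul_of_nonneg_right h2 (div_nonneg hα.1.le (by linarith))
        rw [nsmul_eq_mul] at h1
        rw [mul_div_cancel₀ α' (by linarith : (n : ℝ) ≠ 0)] at h3
        linarith
    _ = ∑ ω, (W ω - ∑ j ∈ S, T ω j) := by
        rw [Finset.sum_sub_distrib, Finset.sum_comm]
    _ ≤ _ := Finset.sum_le_sum fun ω _ => key ω
end
end

section
/- Let k ∈ {1,…,n} and let p, p̃, q̃ ∈ Δ^n satisfy ‖p̃ − p‖_∞ ≤ 1/(16k). Suppose that (i) for every j ∈ [n] with p̃_j ≥ 1/(4k) one has q̃_j ≥ (2/3)p̃_j, and (ii) for every j ∈ [n] with p̃_j ≤ 1/(4k) one has q̃_j ≤ 1/(2k). Let B := {j ∈ [n] : q̃_j ≥ 1/(2k)}. Then 2q̃_j ≥ p_j for all j ∈ B, and p_j ≤ 2/k for all j ∉ B. -/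
/-!
Write `c = 1/k` and compare `p̃_j` with `c/4`; in each case the bounds follow linearly.
If `p̃_j ≤ c/4`, then `p_j ≤ 5c/16`, which is below both `2c` and (on `B`) `c ≤ 2q̃_j`.
If `p̃_j ≥ c/4`, then `p_j ≤ (3/2)q̃_j + c/16`: on `B` one has `c/16 ≤ q̃_j/8`, so this is at most
`2q̃_j`, and off `B` it is at most `13c/16`.
-/

noncomputable section

/-- If `‖p̃ - p‖_∞ ≤ 1/(16k)`, `q̃_j ≥ (2/3)p̃_j` whenever `p̃_j ≥ 1/(4k)`,
and `q̃_j ≤ 1/(2k)` whenever `p̃_j ≤ 1/(4k)`, then with `B = {j : q̃_j ≥ 1/(2k)}` we have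
`2q̃_j ≥ p_j` on `B` and `p_j ≤ 2/k` off `B`. -/
theorem stmt3 {n : ℕ} (k : ℕ) (hk1 : 1 ≤ k) (hkn : k ≤ n)
    (p ptilde qtilde : Fin n → ℝ)
    (hp : IsSimplex p) (hptilde : IsSimplex ptilde) (hqtilde : IsSimplex qtilde)
    (hdist : ∀ j, |ptilde j - p j| ≤ 1 / (16 * (k : ℝ)))
    (h1 : ∀ j, 1 / (4 * (k : ℝ)) ≤ ptilde j → (2 / 3) * ptilde j ≤ qtilde j)
    (h2 : ∀ j, ptilde j ≤ 1 / (4 * (k : ℝ)) → qtilde j ≤ 1 / (2 * (k : ℝ))) :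
    (∀ j, 1 / (2 * (k : ℝ)) ≤ qtilde j → p j ≤ 2 * qtilde j) ∧
    (∀ j, qtilde j < 1 / (2 * (k : ℝ)) → p j ≤ 2 / (k : ℝ)) := by
  have hc : (0 : ℝ) < 1 / (k : ℝ) := by positivity
  -- Rewriting every threshold as a numerical multiple of `1/k` leaves a single atom for `linarith`.
  have e16 : 1 / (16 * (k : ℝ)) = 1 / (k : ℝ) / 16 := by rw [div_div, mul_comm]
  have e4 : 1 / (4 * (k : ℝ)) = 1 / (k : ℝ) / 4 := by rw [div_div, mul_comm]
  have e2 : 1 / (2 * (k : ℝ)) = 1 / (k : ℝ) / 2 := by rw [div_div, mul_comm]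
  have e : 2 / (k : ℝ) = 2 * (1 / (k : ℝ)) := by rw [mul_one_div]
  simp only [e16, e4, e2, e] at *
  generalize 1 / (k : ℝ) = c at *
  refine ⟨fun j hj => ?_, fun j hj => ?_⟩
  all_goals
    have hd := abs_le.mp (hdist j)
    rcases le_total (c / 4) (ptilde j) with h | h
    · have := h1 j h
      linarith
    · linarith
end
end

section
/- Fix A ∈ ℝ^{m×n} with ‖A‖_max ≤ 1 and ε ∈ (0,1). Run the matrix game stochastic process with parameters δ ≤ ε/20, η = ε/15, and T ≥ 6 log(mn)/(ηε). Let ū := (1/T)Σ_{t=0}^{T−1} u_t and v̄ := (1/T)Σ_{t=0}^{T−1} v_t. Then E[ max_{u∈Δ^m} uᵀA v̄ − min_{v∈Δ^n} ūᵀA v ] ≤ ε. -/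
/-! The duality gap at a path is attained at pure strategies `i*`, `j*`, so it equals
`(1/T) ∑ t, (A_{i*} v_t - (u_tᵀ A)_{j*})`. Since `u_t` and `v_t` are multiplicative-weights iterates
for the sampled gains `A e_{j_t}` and `-Aᵀ e_{i_t}`, the regret bound `regret` controls the
corresponding sums against the sampled gains. Replacing sampled gains by true ones leaves the
errors `A (ṽ_t - e_{j_t})` and `Aᵀ (e_{i_t} - ũ_t)` paired with `i*`, `j*`, which depend on the
whole path. These are controlled by running multiplicative weights on the errors
themselves (the ghost iterates `û_t`, `v̂_t`): a second application of `regret` replaces `i*`, `j*` by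
`û_t`, `v̂_t`, which depend on the history only, at which point the error has conditional mean zero
(`sum_pathWeight_mul_eq_zero`).

The constants: after division by `T`, the four regret terms contribute
`2 log(mn)/(ηT) + (3/5) η (1 + 1 + 4 + 4) ≤ ε/3 + 2ε/5`, and the bias of the sampling
distributions contributes `4δ ≤ ε/5`. -/

noncomputable section

/-- the Gibbs distribution associated with a vector `v` -/
def gibbs {k : ℕ} (v : Fin k → ℝ) : Fin k → ℝ :=
  fun j => Real.exp (v j) / ∑ j', Real.exp (v j')

/-- `max_{u ∈ Δ^m} uᵀ A v` -/
def maxPayoff {m n : ℕ} (A : Matrix (Fin m) (Fin n) ℝ) (v : Fin n → ℝ) : ℝ :=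
  sSup {r | ∃ u : Fin m → ℝ, IsSimplex u ∧ r = ∑ i, ∑ j, u i * A i j * v j}

/-- `min_{v ∈ Δ^n} uᵀ A v` -/
def minPayoff {m n : ℕ} (A : Matrix (Fin m) (Fin n) ℝ) (u : Fin m → ℝ) : ℝ :=
  sInf {r | ∃ v : Fin n → ℝ, IsSimplex v ∧ r = ∑ i, ∑ j, u i * A i j * v j}

/-- the iterate `x_t = η ∑_{s<t} e_{i_s}`, where `i_s = (ω s).1` -/
def xIter {m n T : ℕ} (η : ℝ) (ω : Fin T → Fin m × Fin n) (t : ℕ) : Fin m → ℝ :=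
  fun i => η * ((Finset.univ.filter fun s : Fin T => (s : ℕ) < t ∧ (ω s).1 = i).card : ℝ)

/-- the iterate `y_t = η ∑_{s<t} e_{j_s}`, where `j_s = (ω s).2` -/
def yIter {m n T : ℕ} (η : ℝ) (ω : Fin T → Fin m × Fin n) (t : ℕ) : Fin n → ℝ :=
  fun j => η * ((Finset.univ.filter fun s : Fin T => (s : ℕ) < t ∧ (ω s).2 = j).card : ℝ)

/-- `u_t`, the Gibbs distribution of `A y_t` -/
def uIter {m n T : ℕ} (A : Matrix (Fin m) (Fin n) ℝ) (η : ℝ)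
    (ω : Fin T → Fin m × Fin n) (t : ℕ) : Fin m → ℝ :=
  gibbs fun i => ∑ j, A i j * yIter η ω t j

/-- `v_t`, the Gibbs distribution of `-Aᵀ x_t` -/
def vIter {m n T : ℕ} (A : Matrix (Fin m) (Fin n) ℝ) (η : ℝ)
    (ω : Fin T → Fin m × Fin n) (t : ℕ) : Fin n → ℝ :=
  gibbs fun j => -∑ i, A i j * xIter η ω t i

/-! ### Multiplicative weights -/

lemma gibbs_isSimplex {k : ℕ} (hk : 0 < k) (v : Fin k → ℝ) : IsSimplex (gibbs v) := by
  have : Nonempty (Fin k) := ⟨⟨0, hk⟩⟩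
  have hpos : 0 < ∑ j, Real.exp (v j) :=
    Finset.sum_pos (fun _ _ => Real.exp_pos _) Finset.univ_nonempty
  refine ⟨fun i => ?_, ?_⟩
  · unfold gibbs; positivity
  · unfold gibbs
    rw [← Finset.sum_div, div_self hpos.ne']

lemma exp_le_quadratic {x : ℝ} (hx : |x| ≤ 2 / 5) : Real.exp x ≤ 1 + x + 3 / 5 * x ^ 2 := by
  have h := Real.exp_bound (x := x) (by linarith) (n := 3) (by norm_num)
  simp only [Finset.sum_range_succ, Finset.sum_range_zero, Nat.factorial] at h
  norm_num at h
  have h2 := (abs_le.1 h).2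
  have h3 : |x| ^ 3 ≤ 2 / 5 * x ^ 2 := by
    rw [pow_succ, sq_abs, mul_comm]
    exact mul_le_mul_of_nonneg_right hx (sq_nonneg x)
  nlinarith

/-- The multiplicative-weights iterate at time `t` for the gain vectors `g s`, `s < t`. -/
def mw {k T : ℕ} (η : ℝ) (g : Fin T → Fin k → ℝ) (t : ℕ) : Fin k → ℝ :=
  gibbs fun i => η * ∑ s with (s : Fin T).val < t, g s i

lemma filter_lt_succ {T : ℕ} (t : ℕ) (h : t < T) :
    (Finset.univ.filter fun s : Fin T => s.val < t + 1) =
      insert (⟨t, h⟩ : Fin T) (Finset.univ.filter fun s : Fin T => s.val < t) := by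
  ext s
  simp [Fin.ext_iff]
  omega

lemma sum_filter_succ {T : ℕ} (t : ℕ) (h : t < T) (f : Fin T → ℝ) :
    ∑ s with (s : Fin T).val < t + 1, f s
      = f ⟨t, h⟩ + ∑ s with (s : Fin T).val < t, f s := by
  rw [filter_lt_succ t h, Finset.sum_insert (by simp)]

/-- The exponential potential after `t` rounds; the growth factor per round is the moment
generating function of the gain under the Gibbs distribution. -/
lemma potential_le {k T : ℕ} (hk : 0 < k) (η B : ℝ) (hη : 0 ≤ η) (hηB : η * B ≤ 2 / 5)
    (g : Fin T → Fin k → ℝ) (hg : ∀ t i, |g t i| ≤ B) (t : ℕ) (ht : t ≤ T) :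
    ∑ i, Real.exp (η * ∑ s with (s : Fin T).val < t, g s i) ≤
      k * Real.exp (∑ s with (s : Fin T).val < t,
        (η * ∑ i, mw η g s.val i * g s i + 3 / 5 * (η * B) ^ 2)) := by
  have : Nonempty (Fin k) := ⟨⟨0, hk⟩⟩
  induction t with
  | zero => simp
  | succ t ih =>
    have h : t < T := ht
    specialize ih h.le
    simp only [sum_filter_succ t h]
    rw [Real.exp_add, mul_left_comm]
    set Φ := ∑ i, Real.exp (η * ∑ s with (s : Fin T).val < t, g s i) with hΦ
    have hΦpos : 0 < Φ := Finset.sum_pos (fun _ _ => Real.exp_pos _) Finset.univ_nonempty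
    set p := mw η g t with hp
    have hps : IsSimplex p := gibbs_isSimplex hk _
    have hpe : ∀ i, Real.exp (η * ∑ s with (s : Fin T).val < t, g s i) = Φ * p i := by
      intro i
      rw [hp, mw, gibbs, mul_div_cancel₀]
      exact hΦpos.ne'
    calc ∑ i, Real.exp (η * (g ⟨t, h⟩ i + ∑ s with (s : Fin T).val < t, g s i))
        = ∑ i, Φ * (p i * Real.exp (η * g ⟨t, h⟩ i)) := by
          refine Finset.sum_congr rfl fun i _ => ?_
          rw [mul_add, Real.exp_add, hpe]; ring
      _ = Φ * ∑ i, p i * Real.exp (η * g ⟨t, h⟩ i) := by rw [Finset.mul_sum]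
      _ ≤ Φ * Real.exp (η * ∑ i, p i * g ⟨t, h⟩ i + 3 / 5 * (η * B) ^ 2) := by
          refine mul_le_mul_of_nonneg_left ?_ hΦpos.le
          calc ∑ i, p i * Real.exp (η * g ⟨t, h⟩ i)
              ≤ ∑ i, p i * (1 + η * g ⟨t, h⟩ i + 3 / 5 * (η * B) ^ 2) := by
                refine Finset.sum_le_sum fun i _ => mul_le_mul_of_nonneg_left ?_ (hps.1 i)
                have hb : |η * g ⟨t, h⟩ i| ≤ η * B := by
                  rw [abs_mul, abs_of_nonneg hη]
                  exact mul_le_mul_of_nonneg_left (hg _ _) hη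
                have hsq : (η * g ⟨t, h⟩ i) ^ 2 ≤ (η * B) ^ 2 := by
                  rw [← sq_abs]
                  exact pow_le_pow_left₀ (abs_nonneg _) hb 2
                have := exp_le_quadratic (hb.trans hηB)
                linarith
            _ = (η * ∑ i, p i * g ⟨t, h⟩ i + 3 / 5 * (η * B) ^ 2) + 1 := by
                have : ∀ i, p i * (1 + η * g ⟨t, h⟩ i + 3 / 5 * (η * B) ^ 2)
                    = p i * (1 + 3 / 5 * (η * B) ^ 2) + η * (p i * g ⟨t, h⟩ i) := by
                  intro i; ring
                simp only [this]
                rw [Finset.sum_add_distrib, ← Finset.sum_mul, hps.2, ← Finset.mul_sum]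
                ring
            _ ≤ _ := Real.add_one_le_exp _
      _ ≤ _ := by
          rw [mul_comm]
          exact mul_le_mul_of_nonneg_left ih (Real.exp_pos _).le

/-- Regret bound for multiplicative weights against the fixed action `i`. -/
lemma regret {k T : ℕ} (hk : 0 < k) (η B : ℝ) (hη : 0 < η) (hηB : η * B ≤ 2 / 5)
    (g : Fin T → Fin k → ℝ) (hg : ∀ t i, |g t i| ≤ B) (i : Fin k) :
    ∑ t, (g t i - ∑ i', mw η g t.val i' * g t i') ≤
      Real.log k / η + 3 / 5 * η * B ^ 2 * T := by
  have h := potential_le hk η B hη.le hηB g hg T le_rfl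
  have hfil : (Finset.univ.filter fun s : Fin T => s.val < T) = Finset.univ := by
    ext s; simp
  rw [hfil] at h
  have h1 : Real.exp (η * ∑ s, g s i) ≤ ∑ i, Real.exp (η * ∑ s, g s i) :=
    Finset.single_le_sum (f := fun i => Real.exp (η * ∑ s, g s i))
      (fun _ _ => (Real.exp_pos _).le) (Finset.mem_univ i)
  have hk' : (0 : ℝ) < k := by exact_mod_cast hk
  have h2 := Real.log_le_log (Real.exp_pos _) (h1.trans h)
  rw [Real.log_exp, Real.log_mul hk'.ne' (Real.exp_pos _).ne', Real.log_exp,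
    Finset.sum_add_distrib, ← Finset.mul_sum] at h2
  simp only [Finset.sum_const, Finset.card_univ, Fintype.card_fin, nsmul_eq_mul] at h2
  rw [Finset.sum_sub_distrib]
  refine le_of_mul_le_mul_left ?_ hη
  have : η * (Real.log k / η + 3 / 5 * η * B ^ 2 * T)
      = Real.log k + 3 / 5 * (η * B) ^ 2 * T := by field_simp
  rw [this]
  linarith

/-! ### History-dependent path probabilities -/

/-- Resampling one coordinate, by the involution `(ω, a) ↦ (update ω k a, ω k)`. -/
lemma sum_sum_update {T : ℕ} {α : Type*} [Fintype α] [DecidableEq α] (k : Fin T)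
    (f : (Fin T → α) → ℝ) :
    ∑ ω : Fin T → α, ∑ a, f (Function.update ω k a) = Fintype.card α * ∑ ω, f ω := by
  have h : ∑ x : (Fin T → α) × α, f (Function.update x.1 k x.2)
      = ∑ x : (Fin T → α) × α, f x.1 := by
    refine Finset.sum_nbij' (fun x => (Function.update x.1 k x.2, x.1 k))
      (fun x => (Function.update x.1 k x.2, x.1 k)) ?_ ?_ ?_ ?_ ?_ <;> simp
  rw [Fintype.sum_prod_type, Fintype.sum_prod_type] at h
  rw [h]
  simp [Finset.mul_sum]

/-- The probability of the first `k` steps of the path `ω`, when step `s` has conditional law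
`P s ω` given the history. -/
def pathWeight {T : ℕ} {α : Type*} (P : ℕ → (Fin T → α) → α → ℝ) (k : ℕ) (ω : Fin T → α) : ℝ :=
  ∏ s with (s : Fin T).val < k, P s.val ω (ω s)

section path

variable {T : ℕ} {α : Type*} (P : ℕ → (Fin T → α) → α → ℝ)

lemma pathWeight_update [DecidableEq α]
    (hP : ∀ (t : ℕ) ω ω', (∀ s : Fin T, (s : ℕ) < t → ω s = ω' s) → P t ω = P t ω')
    (t : Fin T) (ω : Fin T → α) (a : α) :
    pathWeight P (t.val + 1) (Function.update ω t a) = P t.val ω a * pathWeight P t.val ω := by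
  unfold pathWeight
  have hu : ∀ s : ℕ, s ≤ t.val → P s (Function.update ω t a) = P s ω := by
    intro s hs
    refine hP _ _ _ fun r hr => Function.update_of_ne ?_ _ _
    rintro rfl
    omega
  rw [filter_lt_succ t.val t.isLt, Finset.prod_insert (by simp)]
  congr 1
  · simp [hu]
  · refine Finset.prod_congr rfl fun s hs => ?_
    have hs' : s.val < t.val := by simpa using hs
    rw [hu _ hs'.le, Function.update_of_ne]
    rintro rfl
    omega

/-- Integrating out coordinate `t`. Sums run over complete paths, so that coordinates beyond
the ones involved contribute the factor `card α`. -/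
lemma card_mul_sum_pathWeight_succ [Fintype α] [DecidableEq α]
    (hP : ∀ (t : ℕ) ω ω', (∀ s : Fin T, (s : ℕ) < t → ω s = ω' s) → P t ω = P t ω')
    (t : Fin T) (F : (Fin T → α) → α → ℝ)
    (hF : ∀ ω ω', (∀ s : Fin T, s < t → ω s = ω' s) → F ω = F ω') :
    Fintype.card α * ∑ ω, pathWeight P (t.val + 1) ω * F ω (ω t)
      = ∑ ω, pathWeight P t.val ω * ∑ a, P t.val ω a * F ω a := by
  rw [← sum_sum_update t]
  refine Finset.sum_congr rfl fun ω _ => ?_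
  rw [Finset.mul_sum]
  refine Finset.sum_congr rfl fun a _ => ?_
  have : F (Function.update ω t a) = F ω :=
    hF _ _ fun s hs => Function.update_of_ne hs.ne _ _
  rw [pathWeight_update P hP, this, Function.update_self]
  ring

/-- Steps after the first `k` integrate out of a function `K` of the first `k` coordinates. -/
lemma card_pow_mul_sum_pathWeight [Fintype α] [DecidableEq α]
    (hP : ∀ (t : ℕ) ω ω', (∀ s : Fin T, (s : ℕ) < t → ω s = ω' s) → P t ω = P t ω')
    (h1 : ∀ t ω, ∑ a, P t ω a = 1)
    (k d : ℕ) (hkd : k + d ≤ T) (K : (Fin T → α) → ℝ)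
    (hK : ∀ ω ω', (∀ s : Fin T, s.val < k → ω s = ω' s) → K ω = K ω') :
    (Fintype.card α : ℝ) ^ d * ∑ ω, pathWeight P (k + d) ω * K ω
      = ∑ ω, pathWeight P k ω * K ω := by
  induction d with
  | zero => simp
  | succ d ih =>
    rw [← ih (by omega), pow_succ, mul_assoc]
    congr 1
    have := card_mul_sum_pathWeight_succ P hP ⟨k + d, by omega⟩ (fun ω _ => K ω) (by
      intro ω ω' h
      funext _
      exact hK _ _ fun s hs => h s (Fin.lt_def.2 (by simp; omega)))
    rw [← add_assoc, this]
    simp [← Finset.sum_mul, h1]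

lemma sum_pathWeight [Fintype α] [DecidableEq α] [Nonempty α]
    (hP : ∀ (t : ℕ) ω ω', (∀ s : Fin T, (s : ℕ) < t → ω s = ω' s) → P t ω = P t ω')
    (h1 : ∀ t ω, ∑ a, P t ω a = 1) :
    ∑ ω, pathWeight P T ω = 1 := by
  have h := card_pow_mul_sum_pathWeight P hP h1 0 T (by omega) (fun _ => 1) (fun _ _ _ => rfl)
  have hc : (Fintype.card α : ℝ) ≠ 0 := by exact_mod_cast Fintype.card_ne_zero
  simp only [zero_add, mul_one] at h
  have h0 : ∑ ω : Fin T → α, pathWeight P 0 ω = (Fintype.card α : ℝ) ^ T := by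
    simp [pathWeight]
  rw [h0] at h
  exact mul_left_cancel₀ (pow_ne_zero T hc) (by rw [h, mul_one])

/-- A martingale difference has mean zero. -/
lemma sum_pathWeight_mul_eq_zero [Fintype α] [DecidableEq α] [Nonempty α]
    (hP : ∀ (t : ℕ) ω ω', (∀ s : Fin T, (s : ℕ) < t → ω s = ω' s) → P t ω = P t ω')
    (h1 : ∀ t ω, ∑ a, P t ω a = 1)
    (t : Fin T) (F : (Fin T → α) → α → ℝ)
    (hF : ∀ ω ω', (∀ s : Fin T, s < t → ω s = ω' s) → F ω = F ω')
    (h0 : ∀ ω, ∑ a, P t.val ω a * F ω a = 0) :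
    ∑ ω, pathWeight P T ω * F ω (ω t) = 0 := by
  have hc : (Fintype.card α : ℝ) ≠ 0 := by exact_mod_cast Fintype.card_ne_zero
  have h := card_pow_mul_sum_pathWeight P hP h1 (t.val + 1) (T - (t.val + 1)) (by omega)
    (fun ω => F ω (ω t)) (by
      intro ω ω' h
      rw [hF ω ω' fun s hs => h s (by have := Fin.lt_def.1 hs; omega), h t (by omega)])
  have e : t.val + 1 + (T - (t.val + 1)) = T := by omega
  rw [e] at h
  have h2 := card_mul_sum_pathWeight_succ P hP t F hF
  simp only [h0, mul_zero, Finset.sum_const_zero] at h2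
  rw [(mul_eq_zero.1 h2).resolve_left hc] at h
  exact (mul_eq_zero.1 h).resolve_left (pow_ne_zero _ hc)

end path

/-! ### The bilinear payoff -/

/-- The payoff `pᵀ A q`. -/
def payoff {m n : ℕ} (A : Matrix (Fin m) (Fin n) ℝ) (p : Fin m → ℝ) (q : Fin n → ℝ) : ℝ :=
  ∑ i, ∑ j, p i * A i j * q j

/-- The pure strategy `i`. -/
abbrev pure1 {k : ℕ} (i : Fin k) : Fin k → ℝ := Pi.single i 1

section payoff

variable {m n : ℕ} (A : Matrix (Fin m) (Fin n) ℝ)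

lemma payoff_sub_left (p p' : Fin m → ℝ) (q : Fin n → ℝ) :
    payoff A (p - p') q = payoff A p q - payoff A p' q := by
  simp [payoff, sub_mul, Finset.sum_sub_distrib]

lemma payoff_sub_right (p : Fin m → ℝ) (q q' : Fin n → ℝ) :
    payoff A p (q - q') = payoff A p q - payoff A p q' := by
  simp [payoff, mul_sub, Finset.sum_sub_distrib]

lemma payoff_pure_left (i : Fin m) (q : Fin n → ℝ) :
    payoff A (pure1 i) q = ∑ j, A i j * q j := by
  simp [payoff, Pi.single_apply]

lemma payoff_pure_right (p : Fin m → ℝ) (j : Fin n) :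
    payoff A p (pure1 j) = ∑ i, p i * A i j := by
  simp [payoff, Pi.single_apply]

lemma payoff_pure (i : Fin m) (j : Fin n) : payoff A (pure1 i) (pure1 j) = A i j := by
  simp [payoff, Pi.single_apply]

lemma sum_mul_payoff_pure_left (p : Fin m → ℝ) (q : Fin n → ℝ) :
    ∑ i, p i * payoff A (pure1 i) q = payoff A p q := by
  simp only [payoff_pure_left]
  simp only [payoff, Finset.mul_sum, mul_assoc]

lemma sum_mul_payoff_pure_right (p : Fin m → ℝ) (q : Fin n → ℝ) :
    ∑ j, q j * payoff A p (pure1 j) = payoff A p q := by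
  simp only [payoff_pure_right]
  simp only [payoff, Finset.mul_sum]
  rw [Finset.sum_comm]
  exact Finset.sum_congr rfl fun i _ => Finset.sum_congr rfl fun j _ => by ring

lemma payoff_sum_right {ι : Type*} (s : Finset ι) (c : ℝ) (p : Fin m → ℝ) (q : ι → Fin n → ℝ) :
    payoff A p (fun j => c * ∑ t ∈ s, q t j) = c * ∑ t ∈ s, payoff A p (q t) := by
  simp only [payoff, Finset.mul_sum]
  rw [Finset.sum_comm (s := s)]
  refine Finset.sum_congr rfl fun i _ => ?_
  rw [Finset.sum_comm]
  exact Finset.sum_congr rfl fun t _ => Finset.sum_congr rfl fun j _ => by ring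

lemma payoff_sum_left {ι : Type*} (s : Finset ι) (c : ℝ) (p : ι → Fin m → ℝ) (q : Fin n → ℝ) :
    payoff A (fun i => c * ∑ t ∈ s, p t i) q = c * ∑ t ∈ s, payoff A (p t) q := by
  simp only [payoff, Finset.mul_sum, Finset.sum_mul]
  rw [Finset.sum_comm (s := s)]
  refine Finset.sum_congr rfl fun i _ => ?_
  rw [Finset.sum_comm]
  exact Finset.sum_congr rfl fun t _ => Finset.sum_congr rfl fun j _ => by ring

variable {A}

lemma payoff_le (hA : ∀ i j, |A i j| ≤ 1) (p : Fin m → ℝ) (q : Fin n → ℝ) :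
    |payoff A p q| ≤ (∑ i, |p i|) * ∑ j, |q j| := by
  rw [Finset.sum_mul_sum]
  refine (Finset.abs_sum_le_sum_abs _ _).trans (Finset.sum_le_sum fun i _ =>
    (Finset.abs_sum_le_sum_abs _ _).trans (Finset.sum_le_sum fun j _ => ?_))
  rw [abs_mul, abs_mul]
  have := mul_le_mul_of_nonneg_left (hA i j) (abs_nonneg (p i))
  rw [mul_one] at this
  exact mul_le_mul_of_nonneg_right this (abs_nonneg _)

lemma IsSimplex.sum_abs {k : ℕ} {p : Fin k → ℝ} (h : IsSimplex p) : ∑ i, |p i| = 1 := by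
  rw [← h.2]
  exact Finset.sum_congr rfl fun i _ => abs_of_nonneg (h.1 i)

lemma pure_isSimplex {k : ℕ} (i : Fin k) : IsSimplex (pure1 i) := by
  refine ⟨fun j => ?_, by simp⟩
  by_cases h : j = i <;> simp [h]

lemma IsSimplex.sum_abs_sub_le {k : ℕ} {p q : Fin k → ℝ} (hp : IsSimplex p) (hq : IsSimplex q) :
    ∑ i, |(p - q) i| ≤ 2 := by
  calc ∑ i, |(p - q) i| ≤ ∑ i, (|p i| + |q i|) :=
        Finset.sum_le_sum fun i _ => abs_sub _ _
    _ = 2 := by rw [Finset.sum_add_distrib, hp.sum_abs, hq.sum_abs]; norm_num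

lemma exists_maxPayoff_le (hm : 0 < m) (v : Fin n → ℝ) :
    ∃ i, maxPayoff A v ≤ payoff A (pure1 i) v := by
  have : Nonempty (Fin m) := ⟨⟨0, hm⟩⟩
  obtain ⟨i, hi⟩ := Finite.exists_max fun i => payoff A (pure1 i) v
  refine ⟨i, csSup_le ⟨_, pure1 i, pure_isSimplex i, rfl⟩ ?_⟩
  rintro r ⟨u, hu, rfl⟩
  change payoff A u v ≤ _
  rw [← sum_mul_payoff_pure_left]
  calc _ ≤ ∑ i', u i' * payoff A (pure1 i) v :=
        Finset.sum_le_sum fun i' _ => mul_le_mul_of_nonneg_left (hi i') (hu.1 i')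
    _ = _ := by rw [← Finset.sum_mul, hu.2, one_mul]

lemma exists_le_minPayoff (hn : 0 < n) (u : Fin m → ℝ) :
    ∃ j, payoff A u (pure1 j) ≤ minPayoff A u := by
  have : Nonempty (Fin n) := ⟨⟨0, hn⟩⟩
  obtain ⟨j, hj⟩ := Finite.exists_min fun j => payoff A u (pure1 j)
  refine ⟨j, le_csInf ⟨_, pure1 j, pure_isSimplex j, rfl⟩ ?_⟩
  rintro r ⟨v, hv, rfl⟩
  change _ ≤ payoff A u v
  rw [← sum_mul_payoff_pure_right A u v]
  calc _ = ∑ j', v j' * payoff A u (pure1 j) := by rw [← Finset.sum_mul, hv.2, one_mul]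
    _ ≤ _ := Finset.sum_le_sum fun j' _ => mul_le_mul_of_nonneg_left (hj j') (hv.1 j')

end payoff

/-! ### The process -/

section process

variable {m n T : ℕ} (A : Matrix (Fin m) (Fin n) ℝ) (η : ℝ)

lemma uIter_eq_mw (ω : Fin T → Fin m × Fin n) (t : ℕ) :
    uIter A η ω t = mw η (fun s i => payoff A (pure1 i) (pure1 (ω s).2)) t := by
  unfold uIter mw yIter
  congr 1
  funext i
  simp only [payoff_pure, Finset.card_eq_sum_ones, Nat.cast_sum, Finset.sum_filter, Finset.mul_sum]
  rw [Finset.sum_comm]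
  refine Finset.sum_congr rfl fun s _ => ?_
  by_cases h : s.val < t <;> simp [h, mul_comm]

lemma vIter_eq_mw (ω : Fin T → Fin m × Fin n) (t : ℕ) :
    vIter A η ω t = mw η (fun s j => -payoff A (pure1 (ω s).1) (pure1 j)) t := by
  unfold vIter mw xIter
  congr 1
  funext j
  simp only [payoff_pure, Finset.card_eq_sum_ones, Nat.cast_sum, Finset.sum_filter, Finset.mul_sum]
  rw [Finset.sum_comm, ← Finset.sum_neg_distrib]
  refine Finset.sum_congr rfl fun s _ => ?_
  by_cases h : s.val < t <;> simp [h, mul_comm]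

lemma mw_congr {k : ℕ} {g g' : Fin T → Fin k → ℝ} {t : ℕ}
    (h : ∀ s : Fin T, s.val < t → g s = g' s) : mw η g t = mw η g' t := by
  unfold mw
  congr 1
  funext i
  congr 1
  refine Finset.sum_congr rfl fun s hs => ?_
  rw [h s (by simpa using hs)]

/-- The row player's ghost iterate `û_t`: multiplicative weights run on the sampling errors
`A (ṽ_s - e_{j_s})`, `s < t`. -/
def uGhost (vt : ℕ → (Fin T → Fin m × Fin n) → Fin n → ℝ) (ω : Fin T → Fin m × Fin n) (t : ℕ) :
    Fin m → ℝ :=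
  mw η (fun s i => payoff A (pure1 i) (vt s.val ω - pure1 (ω s).2)) t

/-- The column player's ghost iterate `v̂_t`: multiplicative weights run on the sampling errors
`Aᵀ (e_{i_s} - ũ_s)`, `s < t`. -/
def vGhost (ut : ℕ → (Fin T → Fin m × Fin n) → Fin m → ℝ) (ω : Fin T → Fin m × Fin n) (t : ℕ) :
    Fin n → ℝ :=
  mw η (fun s j => payoff A (pure1 (ω s).1 - ut s.val ω) (pure1 j)) t

/-- The martingale difference at time `t` for the outcome `a = (i_t, j_t)`. -/
def mgDiff (ut : ℕ → (Fin T → Fin m × Fin n) → Fin m → ℝ)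
    (vt : ℕ → (Fin T → Fin m × Fin n) → Fin n → ℝ) (t : ℕ) (ω : Fin T → Fin m × Fin n)
    (a : Fin m × Fin n) : ℝ :=
  payoff A (uGhost A η vt ω t) (vt t ω - pure1 a.2) +
    payoff A (uIter A η ω t) (pure1 a.2 - vt t ω) +
    payoff A (ut t ω - pure1 a.1) (vIter A η ω t) +
    payoff A (pure1 a.1 - ut t ω) (vGhost A η ut ω t)

lemma mean_mgDiff (ut : ℕ → (Fin T → Fin m × Fin n) → Fin m → ℝ)
    (vt : ℕ → (Fin T → Fin m × Fin n) → Fin n → ℝ) (t : ℕ) (ω : Fin T → Fin m × Fin n)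
    (hu : IsSimplex (ut t ω)) (hv : IsSimplex (vt t ω)) :
    ∑ a : Fin m × Fin n, ut t ω a.1 * vt t ω a.2 * mgDiff A η ut vt t ω a = 0 := by
  set p := ut t ω with hp
  set q := vt t ω with hq
  have hR : ∀ r : Fin m → ℝ,
      ∑ a : Fin m × Fin n, p a.1 * q a.2 * payoff A r (q - pure1 a.2) = 0 := by
    intro r
    rw [Fintype.sum_prod_type]
    refine Finset.sum_eq_zero fun i _ => ?_
    simp only [mul_assoc, ← Finset.mul_sum, payoff_sub_right, mul_sub, Finset.sum_sub_distrib]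
    rw [sum_mul_payoff_pure_right, ← Finset.sum_mul, hv.2]
    ring
  have hL : ∀ r : Fin n → ℝ,
      ∑ a : Fin m × Fin n, p a.1 * q a.2 * payoff A (p - pure1 a.1) r = 0 := by
    intro r
    rw [Fintype.sum_prod_type, Finset.sum_comm]
    refine Finset.sum_eq_zero fun j _ => ?_
    simp only [mul_comm (p _) (q j), mul_assoc, ← Finset.mul_sum, payoff_sub_left, mul_sub,
      Finset.sum_sub_distrib]
    rw [sum_mul_payoff_pure_left, ← Finset.sum_mul, hu.2]
    ring
  have key : ∀ a : Fin m × Fin n, p a.1 * q a.2 * mgDiff A η ut vt t ω a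
      = p a.1 * q a.2 * payoff A (uGhost A η vt ω t) (q - pure1 a.2)
        - p a.1 * q a.2 * payoff A (uIter A η ω t) (q - pure1 a.2)
        + p a.1 * q a.2 * payoff A (p - pure1 a.1) (vIter A η ω t)
        - p a.1 * q a.2 * payoff A (p - pure1 a.1) (vGhost A η ut ω t) := by
    intro a
    simp only [mgDiff, payoff_sub_left, payoff_sub_right, ← hp, ← hq]
    ring
  simp only [key, Finset.sum_add_distrib, Finset.sum_sub_distrib, hR, hL]
  simp

lemma mgDiff_hist (ut : ℕ → (Fin T → Fin m × Fin n) → Fin m → ℝ)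
    (vt : ℕ → (Fin T → Fin m × Fin n) → Fin n → ℝ)
    (hu : ∀ (t : ℕ) ω ω', (∀ s : Fin T, (s : ℕ) < t → ω s = ω' s) → ut t ω = ut t ω')
    (hv : ∀ (t : ℕ) ω ω', (∀ s : Fin T, (s : ℕ) < t → ω s = ω' s) → vt t ω = vt t ω')
    (t : ℕ) (ω ω' : Fin T → Fin m × Fin n) (h : ∀ s : Fin T, (s : ℕ) < t → ω s = ω' s) :
    mgDiff A η ut vt t ω = mgDiff A η ut vt t ω' := by
  have e1 : uIter A η ω t = uIter A η ω' t := by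
    simp only [uIter_eq_mw]
    exact mw_congr η fun s hs => by simp only [h s hs]
  have e2 : vIter A η ω t = vIter A η ω' t := by
    simp only [vIter_eq_mw]
    exact mw_congr η fun s hs => by simp only [h s hs]
  have e3 : uGhost A η vt ω t = uGhost A η vt ω' t :=
    mw_congr η fun s hs => by
      simp only [h s hs, hv s.val ω ω' fun r hr => h r (hr.trans hs)]
  have e4 : vGhost A η ut ω t = vGhost A η ut ω' t :=
    mw_congr η fun s hs => by
      simp only [h s hs, hu s.val ω ω' fun r hr => h r (hr.trans hs)]
  funext a
  simp only [mgDiff, e1, e2, e3, e4, hu t ω ω' h, hv t ω ω' h]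

/-- The pathwise bound on the (unnormalized) gap against pure strategies `i`, `j`. -/
lemma gap_le (hm : 0 < m) (hn : 0 < n) {A : Matrix (Fin m) (Fin n) ℝ}
    (hA : ∀ i j, |A i j| ≤ 1) {η δ : ℝ} (hη : 0 < η) (hη' : η ≤ 1 / 5)
    (ut : ℕ → (Fin T → Fin m × Fin n) → Fin m → ℝ)
    (vt : ℕ → (Fin T → Fin m × Fin n) → Fin n → ℝ)
    (hu : ∀ t ω, IsSimplex (ut t ω)) (hv : ∀ t ω, IsSimplex (vt t ω))
    (hu_close : ∀ t ω, ∑ i, |ut t ω i - uIter A η ω t i| ≤ δ)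
    (hv_close : ∀ t ω, ∑ j, |vt t ω j - vIter A η ω t j| ≤ δ)
    (ω : Fin T → Fin m × Fin n) (i : Fin m) (j : Fin n) :
    ∑ t : Fin T, (payoff A (pure1 i) (vIter A η ω t) - payoff A (uIter A η ω t) (pure1 j)) ≤
      2 * Real.log ((m : ℝ) * n) / η + 6 * η * T + 4 * δ * T
        + ∑ t : Fin T, mgDiff A η ut vt t ω (ω t) := by
  have bd : ∀ (p : Fin m → ℝ) (q : Fin n → ℝ) (a b : ℝ), ∑ i, |p i| ≤ a → ∑ j, |q j| ≤ b →
      |payoff A p q| ≤ a * b := fun p q a b ha hb =>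
    (payoff_le hA p q).trans (mul_le_mul ha hb (Finset.sum_nonneg fun _ _ => abs_nonneg _)
      ((Finset.sum_nonneg fun _ _ => abs_nonneg _).trans ha))
  have r1 := regret hm η 1 hη (by linarith)
    (fun (s : Fin T) i => payoff A (pure1 i) (pure1 (ω s).2))
    (fun s i => by simpa [payoff_pure] using hA _ _) i
  have r2 := regret hn η 1 hη (by linarith)
    (fun (s : Fin T) j => -payoff A (pure1 (ω s).1) (pure1 j))
    (fun s i => by simpa [payoff_pure] using hA _ _) j
  have r3 := regret hm η 2 hη (by linarith)
    (fun (s : Fin T) i => payoff A (pure1 i) (vt s.val ω - pure1 (ω s).2))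
    (fun s i => by
      simpa using bd _ _ 1 2 (pure_isSimplex i).sum_abs.le
        ((hv s.val ω).sum_abs_sub_le (pure_isSimplex _))) i
  have r4 := regret hn η 2 hη (by linarith)
    (fun (s : Fin T) j => payoff A (pure1 (ω s).1 - ut s.val ω) (pure1 j))
    (fun s j => by
      simpa using bd _ _ 2 1 ((pure_isSimplex _).sum_abs_sub_le (hu s.val ω))
        (pure_isSimplex j).sum_abs.le) j
  simp only [← uIter_eq_mw, ← vIter_eq_mw, mul_neg, Finset.sum_neg_distrib,
    sum_mul_payoff_pure_left, sum_mul_payoff_pure_right] at r1 r2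
  change ∑ t : Fin T, (_ - ∑ i', uGhost A η vt ω t.val i' * _) ≤ _ at r3
  change ∑ t : Fin T, (_ - ∑ i', vGhost A η ut ω t.val i' * _) ≤ _ at r4
  simp only [sum_mul_payoff_pure_left, sum_mul_payoff_pure_right] at r3 r4
  have step : ∀ t : Fin T,
      payoff A (pure1 i) (vIter A η ω t) - payoff A (uIter A η ω t) (pure1 j) ≤
        (payoff A (pure1 i) (pure1 (ω t).2) - payoff A (uIter A η ω t) (pure1 (ω t).2))
        + (-payoff A (pure1 (ω t).1) (pure1 j) - -payoff A (pure1 (ω t).1) (vIter A η ω t))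
        + (payoff A (pure1 i) (vt t.val ω - pure1 (ω t).2)
            - payoff A (uGhost A η vt ω t) (vt t.val ω - pure1 (ω t).2))
        + (payoff A (pure1 (ω t).1 - ut t.val ω) (pure1 j)
            - payoff A (pure1 (ω t).1 - ut t.val ω) (vGhost A η ut ω t))
        + 4 * δ + mgDiff A η ut vt t ω (ω t) := by
    intro t
    have hU : IsSimplex (uIter A η ω t) := gibbs_isSimplex hm _
    have hV : IsSimplex (vIter A η ω t) := gibbs_isSimplex hn _
    have b1 := (abs_le.1 (bd (pure1 i) (vt t.val ω - vIter A η ω t) 1 δ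
      (pure_isSimplex i).sum_abs.le (hv_close t.val ω))).1
    have b2 := (abs_le.1 (bd (uIter A η ω t) (vt t.val ω - vIter A η ω t) 1 δ
      hU.sum_abs.le (hv_close t.val ω))).2
    have b3 := (abs_le.1 (bd (ut t.val ω - uIter A η ω t) (pure1 j) δ 1
      (hu_close t.val ω) (pure_isSimplex j).sum_abs.le)).2
    have b4 := (abs_le.1 (bd (ut t.val ω - uIter A η ω t) (vIter A η ω t) δ 1
      (hu_close t.val ω) hV.sum_abs.le)).1
    simp only [mgDiff, payoff_sub_left, payoff_sub_right] at b1 b2 b3 b4 ⊢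
    linarith
  refine (Finset.sum_le_sum fun t _ => step t).trans ?_
  simp only [Finset.sum_add_distrib]
  rw [Finset.sum_const, Finset.card_univ, Fintype.card_fin, nsmul_eq_mul,
    Real.log_mul (by positivity) (by positivity)]
  have e : 2 * (Real.log m + Real.log n) / η = 2 * (Real.log m / η) + 2 * (Real.log n / η) := by
    ring
  rw [e]
  linarith

end process

/-- For the matrix game stochastic process with `δ ≤ ε/20`, `η = ε/15`
and `T ≥ 6 log(mn)/(ηε)`, the expected duality gap of the averaged Gibbs iterates
`(ū, v̄)` is at most `ε`. The sampling distributions `ũ_t, ṽ_t` depend only on the history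
`(ω_s)_{s<t}`, and `i_t = (ω t).1`, `j_t = (ω t).2` are conditionally independent given the
history, which is encoded by the product path-probability `∏_t ũ_t(ω)(i_t) ṽ_t(ω)(j_t)`. -/
theorem stmt4 {m n T : ℕ} (hm : 0 < m) (hn : 0 < n)
    (A : Matrix (Fin m) (Fin n) ℝ) (hA : ∀ i j, |A i j| ≤ 1)
    (ε δ η : ℝ) (hε : ε ∈ Set.Ioo (0:ℝ) 1)
    (hδ : δ ≤ ε / 20) (hη : η = ε / 15)
    (hT : 6 * Real.log ((m : ℝ) * n) / (η * ε) ≤ (T : ℝ))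
    (utilde : ℕ → (Fin T → Fin m × Fin n) → Fin m → ℝ)
    (vtilde : ℕ → (Fin T → Fin m × Fin n) → Fin n → ℝ)
    (hu_hist : ∀ (t : ℕ) ω ω', (∀ s : Fin T, (s : ℕ) < t → ω s = ω' s) →
      utilde t ω = utilde t ω')
    (hv_hist : ∀ (t : ℕ) ω ω', (∀ s : Fin T, (s : ℕ) < t → ω s = ω' s) →
      vtilde t ω = vtilde t ω')
    (hu_simp : ∀ t ω, IsSimplex (utilde t ω))
    (hv_simp : ∀ t ω, IsSimplex (vtilde t ω))
    (hu_close : ∀ t ω, ∑ i, |utilde t ω i - uIter A η ω t i| ≤ δ)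
    (hv_close : ∀ t ω, ∑ j, |vtilde t ω j - vIter A η ω t j| ≤ δ) :
    ∑ ω : Fin T → Fin m × Fin n,
      (∏ t : Fin T, utilde t.val ω (ω t).1 * vtilde t.val ω (ω t).2) *
        (maxPayoff A (fun j => (1 / (T : ℝ)) * ∑ t : Fin T, vIter A η ω t.val j) -
          minPayoff A (fun i => (1 / (T : ℝ)) * ∑ t : Fin T, uIter A η ω t.val i)) ≤ ε := by
  obtain ⟨hε0, hε1⟩ := hε
  have hηpos : 0 < η := by rw [hη]; positivity
  have : Nonempty (Fin m × Fin n) := ⟨(⟨0, hm⟩, ⟨0, hn⟩)⟩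
  set P : ℕ → (Fin T → Fin m × Fin n) → Fin m × Fin n → ℝ :=
    fun t ω a => utilde t ω a.1 * vtilde t ω a.2 with hPdef
  have hP : ∀ (t : ℕ) ω ω', (∀ s : Fin T, (s : ℕ) < t → ω s = ω' s) → P t ω = P t ω' := by
    intro t ω ω' h
    simp only [hPdef, hu_hist t ω ω' h, hv_hist t ω ω' h]
  have hP1 : ∀ t ω, ∑ a, P t ω a = 1 := by
    intro t ω
    simp only [hPdef]
    rw [Fintype.sum_prod_type, ← Finset.sum_mul_sum, (hu_simp t ω).2, (hv_simp t ω).2, one_mul]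
  have hw : ∀ ω : Fin T → Fin m × Fin n,
      ∏ t : Fin T, utilde t.val ω (ω t).1 * vtilde t.val ω (ω t).2 = pathWeight P T ω := by
    intro ω
    simp [pathWeight, hPdef]
  have hw0 : ∀ ω, 0 ≤ pathWeight P T ω := fun ω =>
    Finset.prod_nonneg fun t _ => mul_nonneg ((hu_simp _ _).1 _) ((hv_simp _ _).1 _)
  have hsum := sum_pathWeight P hP hP1
  have hmg : ∀ t : Fin T,
      ∑ ω, pathWeight P T ω * mgDiff A η utilde vtilde t.val ω (ω t) = 0 := fun t =>
    sum_pathWeight_mul_eq_zero P hP hP1 t (mgDiff A η utilde vtilde t.val)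
      (fun ω ω' h => mgDiff_hist A η utilde vtilde hu_hist hv_hist t.val ω ω' h)
      (fun ω => mean_mgDiff A η utilde vtilde t.val ω (hu_simp _ _) (hv_simp _ _))
  have hpath : ∀ ω : Fin T → Fin m × Fin n,
      maxPayoff A (fun j => (1 / (T : ℝ)) * ∑ t : Fin T, vIter A η ω t.val j) -
          minPayoff A (fun i => (1 / (T : ℝ)) * ∑ t : Fin T, uIter A η ω t.val i)
        ≤ ε + (1 / (T : ℝ)) * ∑ t : Fin T, mgDiff A η utilde vtilde t.val ω (ω t) := by
    intro ω
    obtain ⟨i, hi⟩ := exists_maxPayoff_le (A := A) hm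
      (fun j => (1 / (T : ℝ)) * ∑ t : Fin T, vIter A η ω t.val j)
    obtain ⟨j, hj⟩ := exists_le_minPayoff (A := A) hn
      (fun i => (1 / (T : ℝ)) * ∑ t : Fin T, uIter A η ω t.val i)
    rw [payoff_sum_right] at hi
    rw [payoff_sum_left] at hj
    refine (sub_le_sub hi hj).trans ?_
    rw [← mul_sub, ← Finset.sum_sub_distrib]
    have hgap := gap_le hm hn hA hηpos (by rw [hη]; linarith) utilde vtilde hu_simp hv_simp
      hu_close hv_close ω i j
    -- `T = 0` is possible when `m = n = 1`; then both averages are `0` because `1 / 0 = 0`.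
    rcases Nat.eq_zero_or_pos T with hT0 | hT0
    · subst hT0
      simp [hε0.le]
    have hTpos : (0 : ℝ) < T := by exact_mod_cast hT0
    have hlog : 2 * Real.log ((m : ℝ) * n) / η ≤ ε * T / 3 := by
      rw [div_le_iff₀ (by positivity)] at hT
      rw [div_le_iff₀ hηpos]
      linarith
    have hδT : 4 * δ * T ≤ ε / 5 * T := mul_le_mul_of_nonneg_right (by linarith) hTpos.le
    have hηT : 6 * η * T = 2 / 5 * (ε * T) := by rw [hη]; ring
    have hεT : 0 < ε * T := by positivity
    have : (1 / (T : ℝ)) * (∑ t : Fin T, (payoff A (pure1 i) (vIter A η ω t)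
        - payoff A (uIter A η ω t) (pure1 j))) ≤
        (1 / (T : ℝ)) * (ε * T + ∑ t : Fin T, mgDiff A η utilde vtilde t.val ω (ω t)) :=
      mul_le_mul_of_nonneg_left (by linarith) (by positivity)
    refine this.trans (le_of_eq ?_)
    field_simp
  simp only [hw]
  calc _ ≤ ∑ ω, pathWeight P T ω *
        (ε + (1 / (T : ℝ)) * ∑ t : Fin T, mgDiff A η utilde vtilde t.val ω (ω t)) :=
        Finset.sum_le_sum fun ω _ => mul_le_mul_of_nonneg_left (hpath ω) (hw0 ω)
    _ = (∑ ω, pathWeight P T ω) * ε + (1 / (T : ℝ)) *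
          ∑ t : Fin T, ∑ ω, pathWeight P T ω * mgDiff A η utilde vtilde t.val ω (ω t) := by
        rw [Finset.sum_comm, Finset.sum_mul, Finset.mul_sum, ← Finset.sum_add_distrib]
        refine Finset.sum_congr rfl fun ω _ => ?_
        rw [← Finset.mul_sum]
        ring
    _ = ε := by simp [hsum, hmg]
end
end

section
/- Fix A ∈ ℝ^{m×n} with ‖A‖_max ≤ 1 and ε, α ∈ (0,1). Run the matrix game stochastic process with parameters δ ≤ ε/20, η = ε/20, and T ≥ 8 log(mn)/(ηε) + 2048 log(1/α)/ε². Let ū := (1/T)Σ_{t=0}^{T−1} u_t and v̄ := (1/T)Σ_{t=0}^{T−1} v_t. Then with probability at least 1 − α, (ū, v̄) is an ε-approximate Nash equilibrium for A, i.e. max_{u∈Δ^m} uᵀA v̄ − min_{v∈Δ^n} ūᵀA v ≤ ε. -/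
/-!
Against pure comparators `i` and `j`, the duality gap of `(ū, v̄)` times `T` is
`∑ t, ((A v_t)_i - (Aᵀ u_t)_j)`. The iterates `u_t` and `v_t` are multiplicative weights responses
to the *sampled* plays `j_s`, `i_s`, so the log-sum-exp potential (`gibbs_regret`) bounds the
analogous sum of sampled payoffs by `log (m n) / η + 2 η T` (`sum_gap_le`); the terms `u_tᵀ A v_t`
of the two players cancel. What is left is a noise term that compares the samples with the
Gibbs distributions.

Conditionally on the past the noise is a sum of two independent parts, each a function bounded
by `2` and centred up to a bias `2 δ`, so its exponential moment at `l` is at most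
`exp (4 l δ + 8 l²)` (`sum_exp_noise_le`). Multiplying along the path (`sum_prod_le_pow`) bounds
the exponential moment of the accumulated noise by `exp (T (4 l δ + 8 l²))`. The Chernoff bound
at `l = ε / 32`, with a union bound over the `m n` pairs `(i, j)`, shows that the noise exceeds
`(1 - 1/8 - 1/10) ε T` for some pair with probability at most
`m n exp (-(13/1280) ε² T) ≤ α`.
-/

noncomputable section

/-- Exponential moments of a bounded function: second-order form of Hoeffding's lemma, a
consequence of `exp x ≤ 1 + x + x ^ 2` on `[-1, 1]`. -/
lemma sum_mul_exp_le {k : ℕ} {p : Fin k → ℝ} (hp : IsSimplex p) {f : Fin k → ℝ} {B l : ℝ}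
    (hf : ∀ b, |f b| ≤ B) (hl : 0 ≤ l) (hlB : l * B ≤ 1) :
    ∑ b, p b * Real.exp (l * f b) ≤ Real.exp (l * ∑ b, p b * f b + l ^ 2 * B ^ 2) := by
  have h1 : ∀ b, p b * Real.exp (l * f b)
      ≤ p b * (1 + l ^ 2 * B ^ 2) + l * (p b * f b) := by
    intro b
    have habs : |l * f b| ≤ l * B := by
      rw [abs_mul, abs_of_nonneg hl]
      exact mul_le_mul_of_nonneg_left (hf b) hl
    have he := (abs_le.1 (Real.abs_exp_sub_one_sub_id_le (habs.trans hlB))).2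
    have hsq : (l * f b) ^ 2 ≤ (l * B) ^ 2 := sq_le_sq.2 (habs.trans (le_abs_self _))
    have : Real.exp (l * f b) ≤ (1 + l ^ 2 * B ^ 2) + l * f b := by nlinarith
    calc _ ≤ p b * ((1 + l ^ 2 * B ^ 2) + l * f b) := mul_le_mul_of_nonneg_left this (hp.1 b)
      _ = _ := by ring
  calc _ ≤ ∑ b, (p b * (1 + l ^ 2 * B ^ 2) + l * (p b * f b)) :=
        Finset.sum_le_sum fun b _ => h1 b
    _ = (l * ∑ b, p b * f b + l ^ 2 * B ^ 2) + 1 := by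
        rw [Finset.sum_add_distrib, ← Finset.sum_mul, hp.2, ← Finset.mul_sum]; ring
    _ ≤ _ := Real.add_one_le_exp _

/-- Exponential moments under `q` of a function centred at its mean under a nearby `p`: the
mismatch between the two distributions costs a drift of at most `2 * d`. -/
lemma sum_mul_exp_centered_le {k : ℕ} {q p : Fin k → ℝ} (hq : IsSimplex q) {d : ℝ}
    (hqp : ∑ b, |q b - p b| ≤ d) {f : Fin k → ℝ} {l : ℝ}
    (hf : ∀ b, |f b| ≤ 2) (hl : 0 ≤ l) (hl2 : l ≤ 1 / 2) :
    ∑ b, q b * Real.exp (l * (f b - ∑ b', p b' * f b'))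
      ≤ Real.exp (2 * l * d + 4 * l ^ 2) := by
  have h1 := sum_mul_exp_le hq hf hl (by linarith)
  have h2 : ∑ b, q b * f b - ∑ b, p b * f b ≤ 2 * d := by
    rw [← Finset.sum_sub_distrib]
    calc _ ≤ ∑ b, 2 * |q b - p b| := by
          refine Finset.sum_le_sum fun b _ => ?_
          rw [← sub_mul]
          calc _ ≤ |(q b - p b) * f b| := le_abs_self _
            _ = |q b - p b| * |f b| := abs_mul _ _
            _ ≤ |q b - p b| * 2 := mul_le_mul_of_nonneg_left (hf b) (abs_nonneg _)
            _ = _ := mul_comm _ _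
      _ ≤ _ := by rw [← Finset.mul_sum]; linarith
  have h3 : ∑ b, q b * Real.exp (l * (f b - ∑ b', p b' * f b'))
      = (∑ b, q b * Real.exp (l * f b)) * Real.exp (-(l * ∑ b', p b' * f b')) := by
    rw [Finset.sum_mul]
    refine Finset.sum_congr rfl fun b _ => ?_
    rw [mul_assoc, ← Real.exp_add]
    congr 2; ring
  rw [h3]
  calc _ ≤ Real.exp (l * ∑ b, q b * f b + l ^ 2 * 2 ^ 2)
        * Real.exp (-(l * ∑ b', p b' * f b')) :=
        mul_le_mul_of_nonneg_right h1 (Real.exp_pos _).le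
    _ ≤ _ := by
        rw [← Real.exp_add, Real.exp_le_exp]
        nlinarith [mul_le_mul_of_nonneg_left h2 hl]

/-! ### Regret of multiplicative weights -/

/-- The partial sum `∑_{s < t} f s` of a sequence indexed by `Fin T`. -/
def partialSum {T : ℕ} (f : Fin T → ℝ) (t : ℕ) : ℝ :=
  ∑ s : Fin T, if (s : ℕ) < t then f s else 0

lemma partialSum_zero {T : ℕ} (f : Fin T → ℝ) : partialSum f 0 = 0 := by simp [partialSum]

lemma partialSum_self {T : ℕ} (f : Fin T → ℝ) : partialSum f T = ∑ s, f s := by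
  simp [partialSum]

lemma partialSum_succ {T : ℕ} (f : Fin T → ℝ) (t : ℕ) (ht : t < T) :
    partialSum f (t + 1) = partialSum f t + f ⟨t, ht⟩ := by
  have h : f ⟨t, ht⟩ = ∑ s : Fin T, if s = ⟨t, ht⟩ then f s else 0 := by simp
  unfold partialSum
  rw [h, ← Finset.sum_add_distrib]
  refine Finset.sum_congr rfl fun s _ => ?_
  by_cases h1 : (s : ℕ) < t
  · have h2 : s ≠ ⟨t, ht⟩ := fun h => by simp [h] at h1
    simp [h1, h2, Nat.lt_succ_of_lt h1]
  · by_cases h2 : s = ⟨t, ht⟩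
    · subst h2; simp
    · have h3 : ¬ (s : ℕ) < t + 1 := fun h => h2 (Fin.ext (by simp; omega))
      simp [h1, h2, h3]

/-- Regret bound for the Gibbs (multiplicative weights) strategy against gains `g s ∈ [-1, 1]`,
by the log-sum-exp potential. -/
lemma gibbs_regret {k T : ℕ} (hk : 0 < k) (g : Fin T → Fin k → ℝ) (hg : ∀ s i, |g s i| ≤ 1)
    {η : ℝ} (h0 : 0 < η) (h1 : η ≤ 1) (i : Fin k) :
    ∑ t, g t i ≤
      ∑ t : Fin T, ∑ i', gibbs (fun i' => η * partialSum (fun s => g s i') t) i' * g t i'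
        + Real.log k / η + η * T := by
  have : Nonempty (Fin k) := ⟨⟨0, hk⟩⟩
  set e : Fin T → ℝ := fun t =>
    ∑ i', gibbs (fun i' => η * partialSum (fun s => g s i') t) i' * g t i' with he
  have pot : ∀ t ≤ T, ∑ i', Real.exp (η * partialSum (fun s => g s i') t)
      ≤ k * Real.exp (η * partialSum e t + t * η ^ 2) := by
    intro t
    induction t with
    | zero => intro _; simp [partialSum_zero]
    | succ t ih =>
      intro ht
      have hpos : 0 < ∑ i', Real.exp (η * partialSum (fun s => g s i') t) :=
        Finset.sum_pos (fun i _ => Real.exp_pos _) Finset.univ_nonempty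
      have hstep : ∑ i', Real.exp (η * partialSum (fun s => g s i') (t + 1))
          = (∑ i', Real.exp (η * partialSum (fun s => g s i') t)) *
            ∑ i', gibbs (fun i' => η * partialSum (fun s => g s i') t) i'
              * Real.exp (η * g ⟨t, ht⟩ i') := by
        rw [Finset.mul_sum]
        refine Finset.sum_congr rfl fun i' _ => ?_
        rw [partialSum_succ _ t ht, mul_add, Real.exp_add]
        unfold gibbs
        field_simp
      have hm := sum_mul_exp_le
        (gibbs_isSimplex hk (fun i' => η * partialSum (fun s => g s i') t))
        (hg ⟨t, ht⟩) h0.le (by linarith)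
      rw [hstep]
      calc _ ≤ (k * Real.exp (η * partialSum e t + t * η ^ 2)) *
            Real.exp (η * e ⟨t, ht⟩ + η ^ 2 * 1 ^ 2) :=
            mul_le_mul (ih (by omega)) hm
              (Finset.sum_nonneg fun b _ =>
                mul_nonneg ((gibbs_isSimplex hk _).1 b) (Real.exp_pos _).le)
              (by positivity)
        _ = _ := by
            rw [mul_assoc, ← Real.exp_add, partialSum_succ _ t ht]
            push_cast; congr 2; ring
  have hT := pot T le_rfl
  simp only [partialSum_self] at hT
  have hi : Real.exp (η * ∑ s, g s i) ≤ ∑ i', Real.exp (η * ∑ s, g s i') :=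
    Finset.single_le_sum (f := fun i' => Real.exp (η * ∑ s, g s i'))
      (fun _ _ => (Real.exp_pos _).le) (Finset.mem_univ i)
  have hk' : (0 : ℝ) < k := by exact_mod_cast hk
  have h2 : η * ∑ s, g s i ≤ Real.log k + (η * ∑ s, e s + T * η ^ 2) := by
    rw [← Real.exp_le_exp, Real.exp_add, Real.exp_log hk']
    exact hi.trans hT
  have h3 : η * ∑ s, g s i ≤ η * (∑ s, e s + Real.log k / η + η * T) := by
    calc _ ≤ _ := h2
      _ = _ := by field_simp; ring
  exact le_of_mul_le_mul_left h3 h0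

/-! ### History-dependent sampling on a finite path space -/

lemma sum_prod_cons {β : Type*} [Fintype β] {T : ℕ}
    (F : Fin (T + 1) → (Fin (T + 1) → β) → ℝ) :
    ∑ ω : Fin (T + 1) → β, ∏ t, F t ω
      = ∑ b : β, ∑ ω : Fin T → β,
          F 0 (Fin.cons b ω) * ∏ t : Fin T, F t.succ (Fin.cons b ω) := by
  rw [← (Fin.consEquiv (fun _ : Fin (T + 1) => β)).sum_comp, Fintype.sum_prod_type]
  refine Finset.sum_congr rfl fun b _ => Finset.sum_congr rfl fun ω _ => ?_
  rw [Fin.prod_univ_succ]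
  rfl

/-- If each history-dependent kernel `K t` has total mass at most `C`, then the product weight on
the path space has total mass at most `C ^ T`. -/
lemma sum_prod_le_pow {β : Type*} [Fintype β] [Nonempty β] {C : ℝ} (hC : 0 ≤ C) :
    ∀ {T : ℕ} (K : ℕ → (Fin T → β) → β → ℝ),
      (∀ t ω ω', (∀ s : Fin T, (s : ℕ) < t → ω s = ω' s) → K t ω = K t ω') →
      (∀ t ω b, 0 ≤ K t ω b) → (∀ t ω, ∑ b, K t ω b ≤ C) →
      ∑ ω : Fin T → β, ∏ t : Fin T, K t ω (ω t) ≤ C ^ T := by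
  intro T
  induction T with
  | zero => intro K _ _ _; simp
  | succ T ih =>
    intro K hK hnn hsum
    obtain ⟨ω₀⟩ : Nonempty (Fin (T + 1) → β) := inferInstance
    rw [sum_prod_cons (fun t ω => K t ω (ω t))]
    have hb : ∀ b : β, ∑ ω : Fin T → β, K ((0 : Fin (T + 1)) : ℕ) (Fin.cons b ω)
          ((Fin.cons b ω : Fin (T + 1) → β) 0) *
          ∏ t : Fin T, K (t.succ : ℕ) (Fin.cons b ω) ((Fin.cons b ω : Fin (T + 1) → β) t.succ)
        ≤ K 0 ω₀ b * C ^ T := by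
      intro b
      have h := ih (fun t ω => K (t + 1) (Fin.cons b ω))
        (fun t ω ω' h => hK _ _ _ fun s => by
          refine Fin.cases ?_ (fun s hs => ?_) s
          · simp
          · simpa using h s (by simpa using hs))
        (fun t ω => hnn _ _) (fun t ω => hsum _ _)
      refine le_trans (le_of_eq ?_) (mul_le_mul_of_nonneg_left h (hnn 0 ω₀ b))
      rw [Finset.mul_sum]
      refine Finset.sum_congr rfl fun ω _ => ?_
      simp only [Fin.cons_zero, Fin.cons_succ, Fin.val_succ, Fin.val_zero]
      rw [hK 0 (Fin.cons b ω) ω₀ (fun s hs => absurd hs (Nat.not_lt_zero _))]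
    calc _ ≤ ∑ b, K 0 ω₀ b * C ^ T := Finset.sum_le_sum fun b _ => hb b
      _ ≤ C * C ^ T := by
        rw [← Finset.sum_mul]
        exact mul_le_mul_of_nonneg_right (hsum _ _) (pow_nonneg hC _)
      _ = _ := by ring

/-- If each history-dependent kernel `K t` is normalised, so is the product weight on paths. -/
lemma sum_prod_eq_one {β : Type*} [Fintype β] [Nonempty β] :
    ∀ {T : ℕ} (K : ℕ → (Fin T → β) → β → ℝ),
      (∀ t ω ω', (∀ s : Fin T, (s : ℕ) < t → ω s = ω' s) → K t ω = K t ω') →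
      (∀ t ω, ∑ b, K t ω b = 1) →
      ∑ ω : Fin T → β, ∏ t : Fin T, K t ω (ω t) = 1 := by
  intro T
  induction T with
  | zero => intro K _ _; simp
  | succ T ih =>
    intro K hK hsum
    obtain ⟨ω₀⟩ : Nonempty (Fin (T + 1) → β) := inferInstance
    rw [sum_prod_cons (fun t ω => K t ω (ω t)), ← hsum 0 ω₀]
    refine Finset.sum_congr rfl fun b _ => ?_
    have h := ih (fun t ω => K (t + 1) (Fin.cons b ω))
      (fun t ω ω' h => hK _ _ _ fun s => by
        refine Fin.cases ?_ (fun s hs => ?_) s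
        · simp
        · simpa using h s (by simpa using hs))
      (fun t ω => hsum _ _)
    rw [← mul_one (K 0 ω₀ b), ← h, Finset.mul_sum]
    refine Finset.sum_congr rfl fun ω _ => ?_
    simp only [Fin.cons_zero, Fin.cons_succ, Fin.val_succ, Fin.val_zero]
    rw [hK 0 (Fin.cons b ω) ω₀ (fun s hs => absurd hs (Nat.not_lt_zero _))]

/-! ### Reduction of the duality gap to pure strategies -/

lemma sum_simplex_le {k : ℕ} {u : Fin k → ℝ} (hu : IsSimplex u) {f : Fin k → ℝ} {c : ℝ}
    (hf : ∀ i, f i ≤ c) : ∑ i, u i * f i ≤ c := by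
  calc _ ≤ ∑ i, u i * c := Finset.sum_le_sum fun i _ => mul_le_mul_of_nonneg_left (hf i) (hu.1 i)
    _ = c := by rw [← Finset.sum_mul, hu.2, one_mul]

lemma abs_sum_simplex_le {k : ℕ} {u : Fin k → ℝ} (hu : IsSimplex u) {f : Fin k → ℝ} {c : ℝ}
    (hf : ∀ i, |f i| ≤ c) : |∑ i, u i * f i| ≤ c := by
  rw [abs_le]
  constructor
  · have := sum_simplex_le hu (f := fun i => - f i) (c := c)
      (fun i => (neg_le_abs _).trans (hf i))
    simp only [mul_neg, Finset.sum_neg_distrib] at this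
    linarith
  · exact sum_simplex_le hu fun i => (le_abs_self _).trans (hf i)

lemma gap_le_s5 {m n : ℕ} (hm : 0 < m) (hn : 0 < n) (A : Matrix (Fin m) (Fin n) ℝ)
    (u : Fin m → ℝ) (v : Fin n → ℝ) (ε : ℝ)
    (h : ∀ i j, ∑ j', A i j' * v j' - ∑ i', u i' * A i' j ≤ ε) :
    maxPayoff A v - minPayoff A u ≤ ε := by
  have : Nonempty (Fin m) := ⟨⟨0, hm⟩⟩
  have : Nonempty (Fin n) := ⟨⟨0, hn⟩⟩
  obtain ⟨i, hi⟩ := Finite.exists_max (fun i => ∑ j', A i j' * v j')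
  obtain ⟨j, hj⟩ := Finite.exists_min (fun j => ∑ i', u i' * A i' j)
  have h1 : maxPayoff A v ≤ ∑ j', A i j' * v j' := by
    refine csSup_le ⟨_, gibbs 0, gibbs_isSimplex hm 0, rfl⟩ ?_
    rintro r ⟨w, hw, rfl⟩
    simp only [mul_assoc, ← Finset.mul_sum]
    exact sum_simplex_le hw hi
  have h2 : ∑ i', u i' * A i' j ≤ minPayoff A u := by
    refine le_csInf ⟨_, gibbs 0, gibbs_isSimplex hn 0, rfl⟩ ?_
    rintro r ⟨w, hw, rfl⟩
    rw [Finset.sum_comm]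
    simp only [← Finset.sum_mul]
    have := sum_simplex_le hw (f := fun j => -∑ i', u i' * A i' j) (fun j => neg_le_neg (hj j))
    simp only [mul_neg, Finset.sum_neg_distrib] at this
    have e : ∑ i, (∑ i_1, u i_1 * A i_1 i) * w i = ∑ i, w i * ∑ i_1, u i_1 * A i_1 i :=
      Finset.sum_congr rfl fun _ _ => mul_comm _ _
    rw [e]; linarith
  linarith [h i j]

/-! ### The iterates of the matrix game process -/

lemma sum_mul_count {k T : ℕ} (a : Fin k → ℝ) (η : ℝ) (c : Fin T → Fin k) (t : ℕ) :
    ∑ j, a j * (η * ((Finset.univ.filter fun s : Fin T => (s : ℕ) < t ∧ c s = j).card : ℝ))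
      = η * partialSum (fun s => a (c s)) t := by
  have h : ∀ j, a j * (η * ((Finset.univ.filter
      fun s : Fin T => (s : ℕ) < t ∧ c s = j).card : ℝ))
      = ∑ s : Fin T, if c s = j then η * (if (s : ℕ) < t then a j else 0) else 0 := by
    intro j
    rw [Finset.card_filter]
    push_cast
    rw [Finset.mul_sum, Finset.mul_sum]
    refine Finset.sum_congr rfl fun s _ => ?_
    by_cases h1 : (s : ℕ) < t <;> by_cases h2 : c s = j <;> simp [h1, h2, mul_comm]
  rw [Finset.sum_congr rfl fun j _ => h j, Finset.sum_comm]
  simp [partialSum, Finset.mul_sum]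

lemma uIter_eq {m n T : ℕ} (A : Matrix (Fin m) (Fin n) ℝ) (η : ℝ)
    (ω : Fin T → Fin m × Fin n) (t : ℕ) :
    uIter A η ω t = gibbs fun i => η * partialSum (fun s => A i (ω s).2) t := by
  unfold uIter yIter
  congr 1; funext i
  exact sum_mul_count (A i) η (fun s => (ω s).2) t

lemma vIter_eq {m n T : ℕ} (A : Matrix (Fin m) (Fin n) ℝ) (η : ℝ)
    (ω : Fin T → Fin m × Fin n) (t : ℕ) :
    vIter A η ω t = gibbs fun j => η * partialSum (fun s => -A (ω s).1 j) t := by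
  unfold vIter xIter
  congr 1; funext j
  rw [← sum_mul_count (fun i => -A i j) η (fun s => (ω s).1) t]
  simp

lemma partialSum_congr {T : ℕ} {f g : Fin T → ℝ} {t : ℕ}
    (h : ∀ s : Fin T, (s : ℕ) < t → f s = g s) : partialSum f t = partialSum g t := by
  refine Finset.sum_congr rfl fun s _ => ?_
  split_ifs with hs
  · exact h s hs
  · rfl

lemma uIter_hist {m n T : ℕ} (A : Matrix (Fin m) (Fin n) ℝ) (η : ℝ) (t : ℕ)
    (ω ω' : Fin T → Fin m × Fin n) (h : ∀ s : Fin T, (s : ℕ) < t → ω s = ω' s) :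
    uIter A η ω t = uIter A η ω' t := by
  rw [uIter_eq, uIter_eq]
  congr 1; funext i
  rw [partialSum_congr fun s hs => by rw [h s hs]]

lemma vIter_hist {m n T : ℕ} (A : Matrix (Fin m) (Fin n) ℝ) (η : ℝ) (t : ℕ)
    (ω ω' : Fin T → Fin m × Fin n) (h : ∀ s : Fin T, (s : ℕ) < t → ω s = ω' s) :
    vIter A η ω t = vIter A η ω' t := by
  rw [vIter_eq, vIter_eq]
  congr 1; funext j
  rw [partialSum_congr fun s hs => by rw [h s hs]]

/-- `(Aᵀ u - Aᵀ e_i)_{j'}`: the disadvantage of the pure row `i` against the mixed row `u` when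
the column player plays `j'`. -/
def rowDev {m n : ℕ} (A : Matrix (Fin m) (Fin n) ℝ) (u : Fin m → ℝ) (i : Fin m) (j' : Fin n) :
    ℝ :=
  ∑ i', u i' * A i' j' - A i j'

/-- `(A e_j - A v)_{i'}`: the excess of the pure column `j` over the mixed column `v` when the
row player plays `i'`. -/
def colDev {m n : ℕ} (A : Matrix (Fin m) (Fin n) ℝ) (v : Fin n → ℝ) (j : Fin n) (i' : Fin m) :
    ℝ :=
  A i' j - ∑ j', v j' * A i' j'

/-- The noise created by playing the samples `b` instead of the mixed strategies `(u, v)`,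
as seen by the pure comparators `i` and `j`. -/
def noise {m n : ℕ} (A : Matrix (Fin m) (Fin n) ℝ) (u : Fin m → ℝ) (v : Fin n → ℝ)
    (i : Fin m) (j : Fin n) (b : Fin m × Fin n) : ℝ :=
  (colDev A v j b.1 - ∑ i', u i' * colDev A v j i') +
    (rowDev A u i b.2 - ∑ j', v j' * rowDev A u i j')

/-- The bilinear terms `uᵀ A v` coming from the two players cancel in the noise. -/
lemma noise_eq {m n : ℕ} (A : Matrix (Fin m) (Fin n) ℝ) (u : Fin m → ℝ) (v : Fin n → ℝ)
    (i : Fin m) (j : Fin n) (b : Fin m × Fin n) :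
    noise A u v i j b = (∑ j', A i j' * v j' - ∑ i', u i' * A i' j)
      - (A i b.2 - ∑ i', u i' * A i' b.2) - (-A b.1 j - ∑ j', v j' * (-A b.1 j')) := by
  have h1 : ∑ i', u i' * colDev A v j i'
      = ∑ i', u i' * A i' j - ∑ i', ∑ j', u i' * (v j' * A i' j') := by
    simp only [colDev, mul_sub, Finset.sum_sub_distrib, Finset.mul_sum]
  have h2 : ∑ j', v j' * rowDev A u i j'
      = ∑ i', ∑ j', u i' * (v j' * A i' j') - ∑ j', A i j' * v j' := by
    simp only [rowDev, mul_sub, Finset.sum_sub_distrib, Finset.mul_sum]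
    rw [Finset.sum_comm]
    congr 1
    · exact Finset.sum_congr rfl fun _ _ => Finset.sum_congr rfl fun _ _ => by ring
    · exact Finset.sum_congr rfl fun _ _ => by ring
  rw [noise, h1, h2]
  simp only [colDev, rowDev, mul_neg, Finset.sum_neg_distrib]
  ring

/-- Conditional exponential moment of the noise, by independence of the two samples. -/
lemma sum_exp_noise_le {m n : ℕ} {A : Matrix (Fin m) (Fin n) ℝ} (hA : ∀ i j, |A i j| ≤ 1)
    {u u' : Fin m → ℝ} {v v' : Fin n → ℝ} (hu : IsSimplex u) (hv : IsSimplex v)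
    (hu' : IsSimplex u') (hv' : IsSimplex v') {d l : ℝ}
    (hud : ∑ i, |u' i - u i| ≤ d) (hvd : ∑ j, |v' j - v j| ≤ d) (hl : 0 ≤ l) (hl2 : l ≤ 1 / 2)
    (i : Fin m) (j : Fin n) :
    ∑ b : Fin m × Fin n, u' b.1 * v' b.2 * Real.exp (l * noise A u v i j b)
      ≤ Real.exp (4 * l * d + 8 * l ^ 2) := by
  have hc : ∀ i', |colDev A v j i'| ≤ 2 := fun i' => by
    have := abs_sum_simplex_le hv (hA i')
    have := abs_sub (A i' j) (∑ j', v j' * A i' j')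
    have := hA i' j
    unfold colDev; linarith
  have hr : ∀ j', |rowDev A u i j'| ≤ 2 := fun j' => by
    have := abs_sum_simplex_le hu (fun i' => hA i' j')
    have := abs_sub (∑ i', u i' * A i' j') (A i j')
    have := hA i j'
    unfold rowDev; linarith
  have h1 := sum_mul_exp_centered_le hu' hud hc hl hl2
  have h2 := sum_mul_exp_centered_le hv' hvd hr hl hl2
  calc _ = (∑ b, u' b * Real.exp (l * (colDev A v j b - ∑ b', u b' * colDev A v j b'))) *
        ∑ b, v' b * Real.exp (l * (rowDev A u i b - ∑ b', v b' * rowDev A u i b')) := by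
        rw [Finset.sum_mul_sum, Fintype.sum_prod_type]
        refine Finset.sum_congr rfl fun a _ => Finset.sum_congr rfl fun b _ => ?_
        simp only [noise, mul_add, Real.exp_add]
        ring
    _ ≤ Real.exp (2 * l * d + 4 * l ^ 2) * Real.exp (2 * l * d + 4 * l ^ 2) :=
        mul_le_mul h1 h2 (Finset.sum_nonneg fun b _ =>
          mul_nonneg (hv'.1 b) (Real.exp_pos _).le) (Real.exp_pos _).le
    _ = _ := by rw [← Real.exp_add]; congr 1; ring

/-- Adding the regret bounds of the two players: the gap against pure comparators is the
accumulated noise plus the two regrets. -/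
lemma sum_gap_le {m n T : ℕ} (hm : 0 < m) (hn : 0 < n)
    {A : Matrix (Fin m) (Fin n) ℝ} (hA : ∀ i j, |A i j| ≤ 1) {η : ℝ} (h0 : 0 < η) (h1 : η ≤ 1)
    (ω : Fin T → Fin m × Fin n) (i : Fin m) (j : Fin n) :
    ∑ t : Fin T, (∑ j', A i j' * vIter A η ω t j' - ∑ i', uIter A η ω t i' * A i' j)
      ≤ ∑ t : Fin T, noise A (uIter A η ω t) (vIter A η ω t) i j (ω t)
        + Real.log ((m : ℝ) * n) / η + 2 * η * T := by
  have hr := gibbs_regret hm (fun (s : Fin T) i => A i (ω s).2) (fun s i => hA _ _) h0 h1 i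
  have hc := gibbs_regret hn (fun (s : Fin T) j => -A (ω s).1 j)
    (fun s j => by rw [abs_neg]; exact hA _ _) h0 h1 j
  simp only [← uIter_eq] at hr
  simp only [← vIter_eq] at hc
  have hlog : Real.log ((m : ℝ) * n) = Real.log m + Real.log n :=
    Real.log_mul (by positivity) (by positivity)
  simp only [noise_eq, Finset.sum_sub_distrib]
  rw [hlog, add_div]
  linarith

/-- For the matrix game stochastic process with `δ ≤ ε/20`, `η = ε/20`
and `T ≥ 8 log(mn)/(ηε) + 2048 log(1/α)/ε²`, with probability at least `1 - α` the averaged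
Gibbs iterates `(ū, v̄)` form an `ε`-approximate Nash equilibrium of `A`. -/
theorem stmt5 {m n T : ℕ} (hm : 0 < m) (hn : 0 < n)
    (A : Matrix (Fin m) (Fin n) ℝ) (hA : ∀ i j, |A i j| ≤ 1)
    (ε α δ η : ℝ) (hε : ε ∈ Set.Ioo (0:ℝ) 1) (hα : α ∈ Set.Ioo (0:ℝ) 1)
    (hδ : δ ≤ ε / 20) (hη : η = ε / 20)
    (hT : 8 * Real.log ((m : ℝ) * n) / (η * ε) + 2048 * Real.log (1 / α) / ε ^ 2 ≤ (T : ℝ))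
    (utilde : ℕ → (Fin T → Fin m × Fin n) → Fin m → ℝ)
    (vtilde : ℕ → (Fin T → Fin m × Fin n) → Fin n → ℝ)
    (hu_hist : ∀ (t : ℕ) ω ω', (∀ s : Fin T, (s : ℕ) < t → ω s = ω' s) →
      utilde t ω = utilde t ω')
    (hv_hist : ∀ (t : ℕ) ω ω', (∀ s : Fin T, (s : ℕ) < t → ω s = ω' s) →
      vtilde t ω = vtilde t ω')
    (hu_simp : ∀ t ω, IsSimplex (utilde t ω))
    (hv_simp : ∀ t ω, IsSimplex (vtilde t ω))
    (hu_close : ∀ t ω, ∑ i, |utilde t ω i - uIter A η ω t i| ≤ δ)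
    (hv_close : ∀ t ω, ∑ j, |vtilde t ω j - vIter A η ω t j| ≤ δ) :
    1 - α ≤ ∑ ω : Fin T → Fin m × Fin n,
      Set.indicator
        {ω : Fin T → Fin m × Fin n |
          maxPayoff A (fun j => (1 / (T : ℝ)) * ∑ t : Fin T, vIter A η ω t.val j) -
            minPayoff A (fun i => (1 / (T : ℝ)) * ∑ t : Fin T, uIter A η ω t.val i) ≤ ε}
        (fun ω => ∏ t : Fin T, utilde t.val ω (ω t).1 * vtilde t.val ω (ω t).2) ω := by
  classical
  obtain ⟨hε0, hε1⟩ := hε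
  obtain ⟨hα0, hα1⟩ := hα
  have hη0 : 0 < η := by rw [hη]; linarith
  have hη1 : η ≤ 1 := by rw [hη]; linarith
  have : Nonempty (Fin m) := ⟨⟨0, hm⟩⟩
  have : Nonempty (Fin n) := ⟨⟨0, hn⟩⟩
  have hu : ∀ t (ω : Fin T → Fin m × Fin n), IsSimplex (uIter A η ω t) :=
    fun t ω => gibbs_isSimplex hm _
  have hv : ∀ t (ω : Fin T → Fin m × Fin n), IsSimplex (vIter A η ω t) :=
    fun t ω => gibbs_isSimplex hn _
  set L := Real.log ((m : ℝ) * n) with hL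
  have hmn : (1 : ℝ) ≤ (m : ℝ) * n := by exact_mod_cast Nat.mul_pos hm hn
  have hL0 : 0 ≤ L := Real.log_nonneg hmn
  have hLα : 0 < Real.log (1 / α) := Real.log_pos (by rw [lt_div_iff₀ hα0]; linarith)
  -- The hypothesis on `T`, cleared of denominators.
  have hTε : 160 * L + 2048 * Real.log (1 / α) ≤ ε ^ 2 * T := by
    have h := mul_le_mul_of_nonneg_left hT (sq_nonneg ε)
    calc _ = ε ^ 2 * (8 * L / (η * ε) + 2048 * Real.log (1 / α) / ε ^ 2) := by
          rw [hη]; field_simp; ring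
      _ ≤ _ := h
  have hT0 : 0 < (T : ℝ) := by
    by_contra hneg
    nlinarith [sq_nonneg ε]
  have hLη : L / η ≤ ε * T / 8 := by
    rw [hη, div_le_iff₀ (by linarith)]
    nlinarith
  set W : (Fin T → Fin m × Fin n) → ℝ :=
    fun ω => ∏ t : Fin T, utilde t.val ω (ω t).1 * vtilde t.val ω (ω t).2 with hW
  have hW0 : ∀ ω, 0 ≤ W ω := fun ω => Finset.prod_nonneg fun t _ =>
    mul_nonneg ((hu_simp _ _).1 _) ((hv_simp _ _).1 _)
  have hW1 : ∑ ω, W ω = 1 := by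
    refine sum_prod_eq_one (fun t ω b => utilde t ω b.1 * vtilde t ω b.2) ?_ ?_
    · intro t ω ω' h
      rw [hu_hist t ω ω' h, hv_hist t ω ω' h]
    · intro t ω
      rw [Fintype.sum_prod_type]
      simp only [← Finset.mul_sum, (hv_simp t ω).2, mul_one, (hu_simp t ω).2]
  -- `ε / 32` is close to the minimiser of the exponent in the Chernoff bound.
  set l : ℝ := ε / 32 with hl
  set X : (Fin T → Fin m × Fin n) → Fin m → Fin n → ℝ := fun ω i j =>
    ∑ t : Fin T, noise A (uIter A η ω t) (vIter A η ω t) i j (ω t) with hX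
  have hmgf : ∀ i j, ∑ ω, W ω * Real.exp (l * X ω i j)
      ≤ Real.exp (T * (4 * l * δ + 8 * l ^ 2)) := by
    intro i j
    have h := sum_prod_le_pow (C := Real.exp (4 * l * δ + 8 * l ^ 2)) (Real.exp_pos _).le
      (fun t (ω : Fin T → Fin m × Fin n) b => utilde t ω b.1 * vtilde t ω b.2 *
        Real.exp (l * noise A (uIter A η ω t) (vIter A η ω t) i j b))
      (by
        intro t ω ω' h
        rw [hu_hist t ω ω' h, hv_hist t ω ω' h, uIter_hist A η t ω ω' h,
          vIter_hist A η t ω ω' h])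
      (fun t ω b => mul_nonneg (mul_nonneg ((hu_simp _ _).1 _) ((hv_simp _ _).1 _))
        (Real.exp_pos _).le)
      (fun t ω => sum_exp_noise_le hA (hu t ω) (hv t ω) (hu_simp t ω) (hv_simp t ω)
        (hu_close t ω) (hv_close t ω) (by linarith) (by linarith) i j)
    rw [Real.exp_nat_mul]
    refine le_trans (le_of_eq ?_) h
    refine Finset.sum_congr rfl fun ω _ => ?_
    simp only [hW, hX, Finset.mul_sum, Real.exp_sum, Finset.prod_mul_distrib]
  -- The threshold `31/40 * ε` is `ε` minus the regrets `ε / 8` and `2 * η = ε / 10`.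
  have hgood : ∀ ω, (∀ i j, X ω i j ≤ 31 / 40 * ε * T) →
      maxPayoff A (fun j => (1 / (T : ℝ)) * ∑ t : Fin T, vIter A η ω t.val j) -
        minPayoff A (fun i => (1 / (T : ℝ)) * ∑ t : Fin T, uIter A η ω t.val i) ≤ ε := by
    intro ω h
    refine gap_le_s5 hm hn A _ _ ε fun i j => ?_
    have h1 := sum_gap_le hm hn hA hη0 hη1 ω i j
    have h2 := h i j
    have e1 : ∑ j', A i j' * ((1 / (T : ℝ)) * ∑ t : Fin T, vIter A η ω t.val j')
        = (1 / (T : ℝ)) * ∑ t : Fin T, ∑ j', A i j' * vIter A η ω t j' := by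
      rw [Finset.sum_comm, Finset.mul_sum]
      refine Finset.sum_congr rfl fun j' _ => ?_
      rw [← Finset.mul_sum]; ring
    have e2 : ∑ i', ((1 / (T : ℝ)) * ∑ t : Fin T, uIter A η ω t.val i') * A i' j
        = (1 / (T : ℝ)) * ∑ t : Fin T, ∑ i', uIter A η ω t i' * A i' j := by
      rw [Finset.sum_comm, Finset.mul_sum]
      refine Finset.sum_congr rfl fun i' _ => ?_
      rw [← Finset.sum_mul]; ring
    rw [e1, e2, ← mul_sub, ← Finset.sum_sub_distrib, one_div, inv_mul_le_iff₀ hT0]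
    refine h1.trans ?_
    have : 2 * η * T = ε * T / 10 := by rw [hη]; ring
    linarith
  -- Union bound over pure comparators, in Chernoff form.
  have hpt : ∀ ω, W ω - ∑ i, ∑ j, W ω * Real.exp (l * X ω i j) *
        Real.exp (-(l * (31 / 40 * ε * T)))
      ≤ Set.indicator
        {ω : Fin T → Fin m × Fin n |
          maxPayoff A (fun j => (1 / (T : ℝ)) * ∑ t : Fin T, vIter A η ω t.val j) -
            minPayoff A (fun i => (1 / (T : ℝ)) * ∑ t : Fin T, uIter A η ω t.val i) ≤ ε}
        W ω := by
    intro ω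
    have hnn : ∀ i j, 0 ≤ W ω * Real.exp (l * X ω i j) *
        Real.exp (-(l * (31 / 40 * ε * T))) := fun i j =>
      mul_nonneg (mul_nonneg (hW0 ω) (Real.exp_pos _).le) (Real.exp_pos _).le
    have hsnn := Finset.sum_nonneg fun i (_ : i ∈ Finset.univ) =>
      Finset.sum_nonneg fun j (_ : j ∈ Finset.univ) => hnn i j
    by_cases hω : ∀ i j, X ω i j ≤ 31 / 40 * ε * T
    · refine le_trans ?_ (Set.indicator_of_mem (a := ω) ?_ W).ge
      · linarith
      · exact hgood ω hω
    · push Not at hω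
      obtain ⟨i, j, hij⟩ := hω
      refine le_trans ?_ (Set.indicator_nonneg (fun ω _ => hW0 ω) ω)
      have h1 : W ω ≤ W ω * Real.exp (l * X ω i j) * Real.exp (-(l * (31 / 40 * ε * T))) := by
        rw [mul_assoc, ← Real.exp_add]
        refine le_mul_of_one_le_right (hW0 ω) (Real.one_le_exp ?_)
        have : 0 ≤ l := by linarith
        nlinarith
      have h2 := Finset.single_le_sum
        (f := fun j => W ω * Real.exp (l * X ω i j) * Real.exp (-(l * (31 / 40 * ε * T))))
        (fun j _ => hnn i j) (Finset.mem_univ j)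
      have h3 := Finset.single_le_sum
        (f := fun i => ∑ j, W ω * Real.exp (l * X ω i j) *
          Real.exp (-(l * (31 / 40 * ε * T))))
        (fun i _ => Finset.sum_nonneg fun j _ => hnn i j) (Finset.mem_univ i)
      linarith
  have hbad : ∑ ω, ∑ i, ∑ j, W ω * Real.exp (l * X ω i j) *
      Real.exp (-(l * (31 / 40 * ε * T))) ≤ α := by
    have e : ∑ ω, ∑ i, ∑ j, W ω * Real.exp (l * X ω i j) *
        Real.exp (-(l * (31 / 40 * ε * T)))
        = ∑ i, ∑ j, (∑ ω, W ω * Real.exp (l * X ω i j)) *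
          Real.exp (-(l * (31 / 40 * ε * T))) := by
      rw [Finset.sum_comm]
      refine Finset.sum_congr rfl fun i _ => ?_
      rw [Finset.sum_comm]
      simp only [Finset.sum_mul]
    rw [e]
    calc _ ≤ ∑ _i : Fin m, ∑ _j : Fin n, Real.exp (T * (4 * l * δ + 8 * l ^ 2)) *
          Real.exp (-(l * (31 / 40 * ε * T))) :=
          Finset.sum_le_sum fun i _ => Finset.sum_le_sum fun j _ =>
            mul_le_mul_of_nonneg_right (hmgf i j) (Real.exp_pos _).le
      _ = Real.exp (L + (T * (4 * l * δ + 8 * l ^ 2) - l * (31 / 40 * ε * T))) := by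
          simp only [Finset.sum_const, Finset.card_univ, Fintype.card_fin, nsmul_eq_mul]
          rw [Real.exp_add, hL, Real.exp_log (by linarith), ← Real.exp_add]
          rw [sub_eq_add_neg]; ring
      _ ≤ Real.exp (Real.log α) := by
          rw [Real.exp_le_exp]
          have hlα : Real.log (1 / α) = -Real.log α := by rw [one_div, Real.log_inv]
          have hd : T * (4 * l * δ) ≤ T * (4 * l * (ε / 20)) := by
            have : 0 ≤ l := by linarith
            gcongr
          rw [hl] at hd ⊢
          nlinarith
      _ = α := Real.exp_log hα0
  calc 1 - α ≤ ∑ ω, (W ω - ∑ i, ∑ j, W ω * Real.exp (l * X ω i j) *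
        Real.exp (-(l * (31 / 40 * ε * T)))) := by
        rw [Finset.sum_sub_distrib, hW1]; linarith
    _ ≤ _ := Finset.sum_le_sum fun ω _ => hpt ω
end
end

section
/- Let A ∈ ℝ^{m×n} with ‖A‖_max ≤ 1, and suppose ū = (1/T)Σ_{t=0}^{T−1} u_t with {u_t} ⊂ Δ^m and v̄ = (1/T)Σ_{t=0}^{T−1} v_t with {v_t} ⊂ Δ^n form an ε-approximate Nash equilibrium for A. Suppose for some δ ∈ (0,1) there are {ũ_t} ⊂ Δ^m and {ṽ_t} ⊂ Δ^n with ‖ũ_t − u_t‖₁ ≤ δ and ‖ṽ_t − v_t‖₁ ≤ δ for all t. Let û := (1/T)Σ_{t=0}^{T−1} e_{i_t} where each i_t ∈ [m] is sampled independently according to ũ_t, and v̂ := (1/T)Σ_{t=0}^{T−1} e_{j_t} where each j_t ∈ [n] is sampled independently according to ṽ_t. If T ≥ 16 log(mn/α)/ε², then with probability at least 1 − α, (û, v̂) is a (2ε + 2δ)-approximate Nash equilibrium for A. -/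
/-! The sampled strategies deviate from `(ū, v̄)` in two ways. Replacing `v_t` by `ṽ_t` changes
every payoff `(A v̄)_i` by at most `δ`, because the entries of `A` are bounded by `1`
(`sampled_payoff_le`). Replacing `ṽ_t` by a sample `e_{j_t}` increases that payoff by `ε / 2` or more
with probability at most `exp (-T ε² / 8) ≤ (α / (mn))²`, by Hoeffding's inequality
(`sum_indicator_hoeffding`). The same holds for the other player, whose problem is the first one for
the matrix `-Aᵀ` (`minPayoff_eq`). If none of these `m + n` deviations occurs, the duality gap grows
by at most `2 (δ + ε / 2)`, hence is at most `2ε + 2δ`.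

The union bound gives failure probability at most `(m + n) (α / (mn))²`, which is at most `α` as soon
as `mn ≥ 2`. When `m = n = 1` this estimate is too weak, but then sampling is deterministic and no
deviation can occur. When `m = 0` or `n = 0`, the simplex hypotheses force `T = 0`, and all payoffs
vanish. -/

noncomputable section

open Finset MeasureTheory ProbabilityTheory in
/-- Hoeffding's lemma for a finite distribution, obtained by realising the weights as a `PMF`. -/
lemma sum_mul_exp_le_s6 {Ω : Type*} [Fintype Ω] (p X : Ω → ℝ) (hp : ∀ x, 0 ≤ p x)
    (hp1 : ∑ x, p x = 1) (hX : ∀ x, |X x| ≤ 1) (s : ℝ) :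
    ∑ x, p x * Real.exp (s * (X x - ∑ y, p y * X y)) ≤ Real.exp (s ^ 2 / 2) := by
  let _ : MeasurableSpace Ω := ⊤
  let P : PMF Ω := PMF.ofFintype (fun x => ENNReal.ofReal (p x)) (by
    rw [← ENNReal.ofReal_sum_of_nonneg (fun x _ => hp x), hp1, ENNReal.ofReal_one])
  have key : ∀ f : Ω → ℝ, ∫ x, f x ∂P.toMeasure = ∑ x, p x * f x := by
    intro f
    rw [PMF.integral_eq_sum]
    refine sum_congr rfl fun x _ => ?_
    simp [P, ENNReal.toReal_ofReal (hp x)]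
  have h := (hasSubgaussianMGF_of_mem_Icc (μ := P.toMeasure) (X := X) (a := -1) (b := 1)
    (measurable_of_finite X).aemeasurable
    (Filter.Eventually.of_forall fun x => abs_le.mp (hX x))).mgf_le s
  rw [mgf, key, key] at h
  refine h.trans (le_of_eq ?_)
  congr 1
  norm_num

/-- Hoeffding's inequality for independent coordinates on a finite product space; the Chernoff
parameter is `s` itself. -/
lemma sum_indicator_hoeffding {Ω : Type*} [Fintype Ω] {T : ℕ} (p X : Fin T → Ω → ℝ)
    (hp : ∀ t x, 0 ≤ p t x) (hp1 : ∀ t, ∑ x, p t x = 1) (hX : ∀ t x, |X t x| ≤ 1)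
    (s : ℝ) (hs : 0 < s) :
    ∑ ω : Fin T → Ω, Set.indicator {ω : Fin T → Ω |
        T * s ≤ ∑ t, (X t (ω t) - ∑ y, p t y * X t y)} (fun ω => ∏ t, p t (ω t)) ω
      ≤ Real.exp (-(T * s ^ 2 / 2)) := by
  classical
  calc _ ≤ ∑ ω : Fin T → Ω, Real.exp (-(T * s ^ 2)) *
        ∏ t, (p t (ω t) * Real.exp (s * (X t (ω t) - ∑ y, p t y * X t y))) := by
        refine Finset.sum_le_sum fun ω _ => ?_
        have h0 : 0 ≤ ∏ t, p t (ω t) := Finset.prod_nonneg fun t _ => hp _ _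
        rw [Finset.prod_mul_distrib, ← Real.exp_sum, ← Finset.mul_sum, mul_left_comm, ← Real.exp_add]
        refine Set.indicator_apply_le' (fun h => ?_) (fun _ => by positivity)
        refine le_mul_of_one_le_right h0 (Real.one_le_exp ?_)
        have := mul_le_mul_of_nonneg_left (Set.mem_ofPred_eq ▸ h :) hs.le
        nlinarith
    _ = Real.exp (-(T * s ^ 2)) *
        ∏ t, ∑ x, p t x * Real.exp (s * (X t x - ∑ y, p t y * X t y)) := by
        rw [← Finset.mul_sum, Fintype.prod_sum]
    _ ≤ Real.exp (-(T * s ^ 2)) * ∏ _t : Fin T, Real.exp (s ^ 2 / 2) := by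
        gcongr with t
        · exact fun t _ => Finset.sum_nonneg fun x _ => mul_nonneg (hp t x) (Real.exp_nonneg _)
        · exact sum_mul_exp_le_s6 (p t) (X t) (hp t) (hp1 t) (hX t) s
    _ = _ := by
        rw [Finset.prod_const, ← Real.exp_nat_mul, ← Real.exp_add]
        congr 1
        simp
        ring

lemma payoff_sum_eq {m n : ℕ} (A : Matrix (Fin m) (Fin n) ℝ) (u : Fin m → ℝ) (v : Fin n → ℝ) :
    ∑ i, ∑ j, u i * A i j * v j = ∑ i, u i * ∑ j, A i j * v j := by
  simp only [Finset.mul_sum, mul_assoc]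

/-- The second player's problem is the first player's problem for `-Aᵀ`. -/
lemma minPayoff_eq {m n : ℕ} (A : Matrix (Fin m) (Fin n) ℝ) (u : Fin m → ℝ) :
    minPayoff A u = -maxPayoff (-A.transpose) u := by
  rw [minPayoff, maxPayoff, Real.sInf_def]
  congr 2
  ext r
  simp only [Set.mem_neg, Set.mem_ofPred_eq]
  refine exists_congr fun v => and_congr_right fun _ => ?_
  have : ∑ i, ∑ j, v i * (-A.transpose) i j * u j = -∑ i, ∑ j, u i * A i j * v j := by
    rw [Finset.sum_comm]
    simp only [← Finset.sum_neg_distrib]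
    refine Finset.sum_congr rfl fun i _ => Finset.sum_congr rfl fun j _ => ?_
    simp [Matrix.transpose_apply]
    ring
  rw [this]
  constructor <;> intro h <;> linarith

lemma convex_sum_le {m : ℕ} {u g : Fin m → ℝ} {c : ℝ} (hu : IsSimplex u) (h : ∀ i, g i ≤ c) :
    ∑ i, u i * g i ≤ c := by
  calc _ ≤ ∑ i, u i * c :=
        Finset.sum_le_sum fun i _ => mul_le_mul_of_nonneg_left (h i) (hu.1 i)
    _ = c := by rw [← Finset.sum_mul, hu.2, one_mul]

lemma isSimplex_single {m : ℕ} (i : Fin m) : IsSimplex (fun k => if i = k then (1 : ℝ) else 0) :=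
  ⟨fun k => by dsimp only; split_ifs <;> norm_num, by simp⟩

lemma maxPayoff_le {m n : ℕ} [NeZero m] {A : Matrix (Fin m) (Fin n) ℝ} {v : Fin n → ℝ} {c : ℝ}
    (h : ∀ i, ∑ j, A i j * v j ≤ c) : maxPayoff A v ≤ c := by
  refine csSup_le ⟨_, _, isSimplex_single 0, rfl⟩ ?_
  rintro r ⟨u, hu, rfl⟩
  rw [payoff_sum_eq]
  exact convex_sum_le hu h

lemma le_maxPayoff {m n : ℕ} (A : Matrix (Fin m) (Fin n) ℝ) (v : Fin n → ℝ) (i : Fin m) :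
    ∑ j, A i j * v j ≤ maxPayoff A v := by
  refine le_csSup ⟨∑ k, |∑ j, A k j * v j|, ?_⟩ ⟨_, isSimplex_single i, ?_⟩
  · rintro r ⟨u, hu, rfl⟩
    rw [payoff_sum_eq]
    refine convex_sum_le hu fun k => (le_abs_self _).trans ?_
    exact Finset.single_le_sum (f := fun k => |∑ j, A k j * v j|)
      (fun _ _ => abs_nonneg _) (Finset.mem_univ k)
  · rw [payoff_sum_eq]
    simp

/-- The best response value against the sampled average exceeds the one against the original average
by at most `δ` for the perturbation `v → ṽ`, plus the sampling deviation `s`. -/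
lemma sampled_payoff_le {k l T : ℕ} [NeZero k] (hT : 0 < T) (B : Matrix (Fin k) (Fin l) ℝ)
    (hB : ∀ i j, |B i j| ≤ 1) {δ s : ℝ} (v w : Fin T → Fin l → ℝ)
    (hc : ∀ t, ∑ j, |w t j - v t j| ≤ δ) (f : Fin T → Fin l)
    (hdev : ∀ i, ∑ t, (B i (f t) - ∑ j, w t j * B i j) ≤ T * s) :
    maxPayoff B (fun j => (1 / (T : ℝ)) * ∑ t, (if f t = j then (1:ℝ) else 0)) ≤
      maxPayoff B (fun j => (1 / (T : ℝ)) * ∑ t, v t j) + δ + s := by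
  refine maxPayoff_le fun i => ?_
  have hT' : (0 : ℝ) < T := by exact_mod_cast hT
  have swap : ∀ z : Fin T → Fin l → ℝ, ∑ j, B i j * ((1 / (T : ℝ)) * ∑ t, z t j) =
      (1 / (T : ℝ)) * ∑ t, ∑ j, z t j * B i j := by
    intro z
    rw [Finset.sum_comm, Finset.mul_sum]
    refine Finset.sum_congr rfl fun j _ => ?_
    rw [← Finset.sum_mul]
    ring
  have h1 := le_maxPayoff B (fun j => (1 / (T : ℝ)) * ∑ t, v t j) i
  have h2 : ∑ t, ∑ j, w t j * B i j ≤ ∑ t, ∑ j, v t j * B i j + T * δ := by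
    have : ∀ t, ∑ j, w t j * B i j ≤ ∑ j, v t j * B i j + δ := by
      intro t
      refine le_trans ?_ (add_le_add_right (hc t) _)
      rw [← Finset.sum_add_distrib]
      refine Finset.sum_le_sum fun j _ => ?_
      have : (w t j - v t j) * B i j ≤ |w t j - v t j| := by
        refine (le_abs_self _).trans ?_
        rw [abs_mul]
        exact mul_le_of_le_one_right (abs_nonneg _) (hB i j)
      linarith
    refine (Finset.sum_le_sum fun t _ => this t).trans (le_of_eq ?_)
    simp [Finset.sum_add_distrib]
  have h3 := hdev i
  rw [Finset.sum_sub_distrib] at h3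
  rw [swap] at h1 ⊢
  simp only [ite_mul, one_mul, zero_mul, Finset.sum_ite_eq, Finset.mem_univ, if_true]
  calc (1 / (T : ℝ)) * ∑ t, B i (f t)
      ≤ (1 / (T : ℝ)) * (∑ t, ∑ j, v t j * B i j + T * δ + T * s) := by
        gcongr
        linarith
    _ = (1 / (T : ℝ)) * (∑ t, ∑ j, v t j * B i j) + δ + s := by
        field_simp
    _ ≤ _ := by linarith

/-- The union bound is strong enough unless `m = n = 1`. -/
lemma union_bound_le {m n T : ℕ} (hm : 0 < m) (hn : 0 < n) (hmn : 2 ≤ m * n) {ε α : ℝ}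
    (hε : 0 < ε) (hα : α ∈ Set.Ioo (0:ℝ) 1)
    (hT : 16 * Real.log ((m : ℝ) * n / α) / ε ^ 2 ≤ (T : ℝ)) :
    (m + n) * Real.exp (-(T * (ε / 2) ^ 2 / 2)) ≤ α := by
  obtain ⟨hα0, hα1⟩ := hα
  have hm' : (1 : ℝ) ≤ m := by exact_mod_cast hm
  have hn' : (1 : ℝ) ≤ n := by exact_mod_cast hn
  have hmn' : (2 : ℝ) ≤ m * n := by exact_mod_cast hmn
  have hpos : 0 < (m : ℝ) * n / α := by positivity
  rw [div_le_iff₀ (by positivity)] at hT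
  have h1 : Real.exp (-(T * (ε / 2) ^ 2 / 2)) ≤ ((m : ℝ) * n / α)⁻¹ ^ 2 := by
    rw [← Real.exp_log (inv_pos.mpr hpos), ← Real.exp_nat_mul, Real.log_inv]
    apply Real.exp_le_exp.mpr
    push_cast
    linarith
  refine (mul_le_mul_of_nonneg_left h1 (by positivity)).trans ?_
  rw [inv_div, div_pow, mul_div_assoc', div_le_iff₀ (by positivity)]
  have h2 : (m : ℝ) + n ≤ (m * n) ^ 2 := by nlinarith [mul_nonneg (sub_nonneg.2 hm') (sub_nonneg.2 hn')]
  have h3 : (m + n : ℝ) * α ≤ (m * n) ^ 2 := by nlinarith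
  nlinarith

/-- Subsampling preserves approximate Nash equilibria: if the averages
`(ū, v̄)` of `{u_t} ⊂ Δ^m, {v_t} ⊂ Δ^n` form an `ε`-approximate NE, `‖ũ_t - u_t‖₁ ≤ δ`,
`‖ṽ_t - v_t‖₁ ≤ δ`, and `T ≥ 16 log(mn/α)/ε²`, then the empirical averages of independent
samples `i_t ∼ ũ_t`, `j_t ∼ ṽ_t` form a `(2ε + 2δ)`-approximate NE with probability
at least `1 - α` (probability over the sample space `Fin T → Fin m × Fin n` with product
mass `∏_t ũ_t(i_t) ṽ_t(j_t)`). -/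
theorem stmt6 {m n T : ℕ}
    (A : Matrix (Fin m) (Fin n) ℝ) (hA : ∀ i j, |A i j| ≤ 1)
    (ε α δ : ℝ) (hε : 0 < ε) (hα : α ∈ Set.Ioo (0:ℝ) 1) (hδ : δ ∈ Set.Ioo (0:ℝ) 1)
    (u utilde : Fin T → Fin m → ℝ) (v vtilde : Fin T → Fin n → ℝ)
    (hu : ∀ t, IsSimplex (u t)) (hv : ∀ t, IsSimplex (v t))
    (hutilde : ∀ t, IsSimplex (utilde t)) (hvtilde : ∀ t, IsSimplex (vtilde t))
    (hu_close : ∀ t, ∑ i, |utilde t i - u t i| ≤ δ)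
    (hv_close : ∀ t, ∑ j, |vtilde t j - v t j| ≤ δ)
    (hNE : maxPayoff A (fun j => (1 / (T : ℝ)) * ∑ t, v t j) -
      minPayoff A (fun i => (1 / (T : ℝ)) * ∑ t, u t i) ≤ ε)
    (hT : 16 * Real.log ((m : ℝ) * n / α) / ε ^ 2 ≤ (T : ℝ)) :
    1 - α ≤ ∑ ω : Fin T → Fin m × Fin n,
      Set.indicator
        {ω : Fin T → Fin m × Fin n |
          maxPayoff A
              (fun j => (1 / (T : ℝ)) * ∑ t, (if (ω t).2 = j then (1:ℝ) else 0)) -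
            minPayoff A
              (fun i => (1 / (T : ℝ)) * ∑ t, (if (ω t).1 = i then (1:ℝ) else 0))
          ≤ 2 * ε + 2 * δ}
        (fun ω => ∏ t, utilde t (ω t).1 * vtilde t (ω t).2) ω := by
  classical
  set p : Fin T → Fin m × Fin n → ℝ := fun t x => utilde t x.1 * vtilde t x.2 with hp
  have hp0 : ∀ t x, 0 ≤ p t x := fun t x => mul_nonneg ((hutilde t).1 _) ((hvtilde t).1 _)
  have hp1 : ∀ t, ∑ x, p t x = 1 := fun t => by
    simp only [hp, Fintype.sum_prod_type, ← Finset.mul_sum, (hvtilde t).2, mul_one, (hutilde t).2]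
  have htotal : ∑ ω : Fin T → Fin m × Fin n, ∏ t, p t (ω t) = 1 := by
    rw [← Fintype.prod_sum]
    simp [hp1]
  have all_good : ∀ G : Set (Fin T → Fin m × Fin n), (∀ ω, ω ∈ G) →
      1 - α ≤ ∑ ω, G.indicator (fun ω => ∏ t, p t (ω t)) ω := by
    intro G hG
    simp only [Set.indicator_of_mem (hG _), htotal]
    linarith [hα.1]
  rcases Nat.eq_zero_or_pos T with rfl | hTpos
  · rcases Nat.eq_zero_or_pos (m * n) with hmn | hmn
    · -- With no rounds both averages are the zero vector, so every payoff is zero.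
      refine all_good _ fun ω => ?_
      have h0 : ∀ {k l : ℕ} (B : Matrix (Fin k) (Fin l) ℝ), maxPayoff B (fun _ => 0) = 0 := by
        intro k l B
        refine le_antisymm (Real.sSup_nonpos ?_) (Real.sSup_nonneg ?_) <;>
        · rintro r ⟨u, -, rfl⟩
          simp
      have hδ' := hδ.1
      simp only [Set.mem_ofPred_eq, minPayoff_eq, Finset.univ_eq_empty, Finset.sum_empty, mul_zero,
        h0]
      linarith
    · exfalso
      have h1 : (1 : ℝ) ≤ (m : ℝ) * n := by exact_mod_cast hmn
      have : 0 < Real.log ((m : ℝ) * n / α) :=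
        Real.log_pos ((one_lt_div hα.1).mpr (hα.2.trans_le h1))
      have : 0 < 16 * Real.log ((m : ℝ) * n / α) / ε ^ 2 := by positivity
      simp only [Nat.cast_zero] at hT
      linarith
  have hm : 0 < m := by
    rcases Nat.eq_zero_or_pos m with rfl | h
    · simpa using (hu ⟨0, hTpos⟩).2
    · exact h
  have hn : 0 < n := by
    rcases Nat.eq_zero_or_pos n with rfl | h
    · simpa using (hv ⟨0, hTpos⟩).2
    · exact h
  have : NeZero m := ⟨hm.ne'⟩
  have : NeZero n := ⟨hn.ne'⟩
  have hA' : ∀ j i, |(-A.transpose) j i| ≤ 1 := fun j i => by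
    simpa [Matrix.transpose_apply] using hA i j
  have good : ∀ ω : Fin T → Fin m × Fin n,
      (∀ i, ∑ t, (A i (ω t).2 - ∑ j, vtilde t j * A i j) ≤ T * (ε / 2)) →
      (∀ j, ∑ t, ((-A.transpose) j (ω t).1 - ∑ i, utilde t i * (-A.transpose) j i)
        ≤ T * (ε / 2)) →
      maxPayoff A
          (fun j => (1 / (T : ℝ)) * ∑ t, (if (ω t).2 = j then (1:ℝ) else 0)) -
        minPayoff A
          (fun i => (1 / (T : ℝ)) * ∑ t, (if (ω t).1 = i then (1:ℝ) else 0))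
        ≤ 2 * ε + 2 * δ := by
    intro ω h1 h2
    have k1 := sampled_payoff_le hTpos A hA v vtilde hv_close (fun t => (ω t).2) h1
    have k2 := sampled_payoff_le hTpos (-A.transpose) hA' u utilde hu_close (fun t => (ω t).1) h2
    rw [minPayoff_eq] at hNE ⊢
    linarith
  rcases Nat.lt_or_ge (m * n) 2 with hmn | hmn
  · obtain rfl : m = 1 := by nlinarith
    obtain rfl : n = 1 := by omega
    refine all_good _ fun ω => good ω (fun i => ?_) (fun j => ?_)
    · refine (Finset.sum_nonpos fun t _ => ?_).trans (by positivity)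
      have := (hvtilde t).2
      simp only [Fin.sum_univ_one] at this ⊢
      rw [this, Subsingleton.elim (ω t).2 0]
      simp
    · refine (Finset.sum_nonpos fun t _ => ?_).trans (by positivity)
      have := (hutilde t).2
      simp only [Fin.sum_univ_one] at this ⊢
      rw [this, Subsingleton.elim (ω t).1 0]
      simp
  have mean2 : ∀ t (g : Fin n → ℝ), ∑ x, p t x * g x.2 = ∑ j, vtilde t j * g j := fun t g => by
    simp only [hp, Fintype.sum_prod_type, mul_assoc, ← Finset.mul_sum, ← Finset.sum_mul,
      (hutilde t).2, one_mul]
  have mean1 : ∀ t (g : Fin m → ℝ), ∑ x, p t x * g x.1 = ∑ i, utilde t i * g i := fun t g => by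
    simp only [hp, Fintype.sum_prod_type_right, mul_right_comm _ _ (g _), ← Finset.sum_mul,
      ← Finset.mul_sum, (hvtilde t).2, mul_one]
  have bad1 := fun i => sum_indicator_hoeffding p (fun _ x => A i x.2) hp0 hp1
    (fun _ _ => hA _ _) (ε / 2) (by positivity)
  have bad2 := fun j => sum_indicator_hoeffding p (fun _ x => (-A.transpose) j x.1) hp0 hp1
    (fun _ _ => hA' _ _) (ε / 2) (by positivity)
  simp only [fun t i => mean2 t (fun j => A i j)] at bad1
  simp only [fun t j => mean1 t (fun i => (-A.transpose) j i)] at bad2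
  set P : (Fin T → Fin m × Fin n) → ℝ := fun ω => ∏ t, p t (ω t) with hP
  have hP0 : ∀ ω, 0 ≤ P ω := fun ω => Finset.prod_nonneg fun t _ => hp0 _ _
  set B1 : Fin m → Set (Fin T → Fin m × Fin n) := fun i =>
    {ω | T * (ε / 2) ≤ ∑ t, (A i (ω t).2 - ∑ j, vtilde t j * A i j)} with hB1
  set B2 : Fin n → Set (Fin T → Fin m × Fin n) := fun j =>
    {ω | T * (ε / 2) ≤ ∑ t, ((-A.transpose) j (ω t).1 -
      ∑ i, utilde t i * (-A.transpose) j i)} with hB2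
  set G : Set (Fin T → Fin m × Fin n) := {ω | maxPayoff A
          (fun j => (1 / (T : ℝ)) * ∑ t, (if (ω t).2 = j then (1:ℝ) else 0)) -
        minPayoff A
          (fun i => (1 / (T : ℝ)) * ∑ t, (if (ω t).1 = i then (1:ℝ) else 0))
        ≤ 2 * ε + 2 * δ} with hG
  have ind0 : ∀ (S : Set (Fin T → Fin m × Fin n)) ω, 0 ≤ S.indicator P ω := fun S ω =>
    Set.indicator_apply_nonneg fun _ => hP0 ω
  have cover : ∀ ω, P ω ≤ G.indicator P ω + (∑ i, (B1 i).indicator P ω +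
      ∑ j, (B2 j).indicator P ω) := by
    intro ω
    have n1 : 0 ≤ ∑ i, (B1 i).indicator P ω := Finset.sum_nonneg fun i _ => ind0 _ _
    have n2 : 0 ≤ ∑ j, (B2 j).indicator P ω := Finset.sum_nonneg fun j _ => ind0 _ _
    by_cases h1 : ∃ i, ω ∈ B1 i
    · obtain ⟨i, hi⟩ := h1
      have := Finset.single_le_sum (f := fun i => (B1 i).indicator P ω) (fun i _ => ind0 _ _)
        (Finset.mem_univ i)
      simp only [Set.indicator_of_mem hi] at this
      linarith [ind0 G ω]
    by_cases h2 : ∃ j, ω ∈ B2 j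
    · obtain ⟨j, hj⟩ := h2
      have := Finset.single_le_sum (f := fun j => (B2 j).indicator P ω) (fun i _ => ind0 _ _)
        (Finset.mem_univ j)
      simp only [Set.indicator_of_mem hj] at this
      linarith [ind0 G ω]
    have hω : ω ∈ G := good ω (fun i => (not_le.mp fun h => h1 ⟨i, h⟩).le)
      (fun j => (not_le.mp fun h => h2 ⟨j, h⟩).le)
    rw [Set.indicator_of_mem hω]
    linarith
  have hsum := Finset.sum_le_sum fun ω (_ : ω ∈ Finset.univ) => cover ω
  rw [htotal, Finset.sum_add_distrib, Finset.sum_add_distrib,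
    Finset.sum_comm (t := (Finset.univ : Finset (Fin m))),
    Finset.sum_comm (t := (Finset.univ : Finset (Fin n)))] at hsum
  have s1 := Finset.sum_le_sum fun i (_ : i ∈ Finset.univ) => bad1 i
  have s2 := Finset.sum_le_sum fun j (_ : j ∈ Finset.univ) => bad2 j
  rw [Finset.sum_const, Finset.card_univ, Fintype.card_fin, nsmul_eq_mul] at s1 s2
  have hub := union_bound_le hm hn hmn hε hα hT
  change 1 - α ≤ ∑ ω, G.indicator P ω
  linarith
end
end

section
/- There is an absolute constant c > 0 with the following property. For every β ≥ 1 and every ξ ∈ (0, 1/10], there exists a real polynomial P of degree at most c · β · log(1/ξ) such that |P(x)| ≤ 3 for all x ∈ [−1, 1], and |P(x) − exp(βx)| ≤ ξ for all x ∈ [−1, 0]. -/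
/-!
A one-sided mollification of the exponential. Put `a = 1 / (4β)` and average the truncated
exponential `exp (β y)`, `-2 ≤ y ≤ a`, against a polynomial kernel `K ≥ 0`:
`P x = c⁻¹ ∫ y in -2..a, exp (β y) * K (x - y)`. This is a polynomial in `x` of degree at most
`deg K` (`exists_conv_poly`). As `exp (β y) = exp (β x) * exp (-β (x - y))`, the exponential is an
eigenfunction of convolution, so on `[-1, 0]` the choice `c = ∫ t in -a..a, exp (-β t) * K t`
leaves only an error controlled by the mass of `K` on `a ≤ |t| ≤ 3`; the truncation at `y = a`,
where `exp (β y) = exp (1/4)`, keeps `P` bounded on all of `[-1, 1]` (`exists_approx`).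

The kernel is `K t = D (t / 4) ^ (2 r)`, where `D t = T_N t / t` for the Chebyshev polynomial of
odd degree `N`. Then `|D t| ≤ 1 / |t|` on `[-1, 1]`, whereas `|D t| ≥ N / 2` for
`0 < |t| ≤ 1 / N` (`exists_peak`). With `N` of order `β`, the relative tail mass of `K` is of
order `4 ^ (-r)` (`exists_kernel`), so `r` of order `log (1 / ξ)` suffices, for a total degree
of order `β log (1 / ξ)`.
-/

open Polynomial in
/-- The polynomial `T_N / X` for odd `N = 2 m + 1`. -/
theorem exists_peak (m : ℕ) : ∃ D : Polynomial ℝ, D.natDegree ≤ 2 * m ∧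
    (∀ t : ℝ, |t| ≤ 1 → |t| * |D.eval t| ≤ 1) ∧
    (∀ t : ℝ, 0 < t → t ≤ 1 / (2 * m + 1) → ((2 * m + 1 : ℝ)) / 2 ≤ |D.eval t|) := by
  have key : ∀ φ : ℝ, |(Chebyshev.T ℝ ((2 * m + 1 : ℕ) : ℤ)).eval (Real.sin φ)|
      = |Real.sin ((2 * m + 1) * φ)| := by
    intro φ
    rw [← Real.cos_pi_div_two_sub, Chebyshev.T_real_cos]
    have h : (((2 * m + 1 : ℕ) : ℤ) : ℝ) * (Real.pi / 2 - φ)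
        = (Real.pi / 2 - (2 * m + 1) * φ) + m * Real.pi := by push_cast; ring
    rw [h, Real.cos_add_nat_mul_pi, Real.cos_pi_div_two_sub, abs_mul]
    simp
  have hdvd : (X : ℝ[X]) ∣ Chebyshev.T ℝ ((2 * m + 1 : ℕ) : ℤ) := by
    rw [X_dvd_iff, coeff_zero_eq_eval_zero]
    simpa only [Real.sin_zero, mul_zero, abs_zero, abs_eq_zero] using key 0
  obtain ⟨D, hD⟩ := hdvd
  have hev : ∀ t : ℝ, |t| * |D.eval t| = |(Chebyshev.T ℝ ((2 * m + 1 : ℕ) : ℤ)).eval t| := by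
    intro t
    rw [hD, eval_mul, eval_X, abs_mul]
  have hsin : ∀ t : ℝ, |t| ≤ 1 → |t| * |D.eval t|
      = |Real.sin ((2 * m + 1) * Real.arcsin t)| := by
    intro t ht
    rw [hev, ← key, Real.sin_arcsin (abs_le.1 ht).1 (abs_le.1 ht).2]
  refine ⟨D, ?_, ?_, ?_⟩
  · by_cases h0 : D = 0
    · simp [h0]
    have h1 := congrArg natDegree hD
    rw [natDegree_X_mul h0, Chebyshev.natDegree_T] at h1
    omega
  · intro t ht
    rw [hsin t ht]
    exact Real.abs_sin_le_one _
  · intro t ht0 ht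
    have hN : (0:ℝ) < 2 * m + 1 := by positivity
    have hN1 : (1:ℝ) / (2 * m + 1) ≤ 1 := by
      rw [div_le_one hN]; linarith [(Nat.cast_nonneg m : (0:ℝ) ≤ m)]
    have ht1 : |t| ≤ 1 := by rw [abs_of_pos ht0]; linarith
    have hs := hsin t ht1
    set φ := Real.arcsin t with hφ
    have hφ0 : 0 ≤ φ := Real.arcsin_nonneg.2 ht0.le
    have hφt : Real.sin φ = t := Real.sin_arcsin (abs_le.1 ht1).1 (abs_le.1 ht1).2
    have hpi := Real.pi_pos
    have h2 : 2 / Real.pi * φ ≤ t := by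
      rw [← hφt]; exact Real.mul_le_sin hφ0 (Real.arcsin_le_pi_div_two t)
    have h2' : φ ≤ Real.pi / 2 * t := by
      have := mul_le_mul_of_nonneg_left h2 (by positivity : 0 ≤ Real.pi / 2)
      calc φ = Real.pi / 2 * (2 / Real.pi * φ) := by field_simp
        _ ≤ _ := this
    have h3 : (2 * m + 1) * φ ≤ Real.pi / 2 := by
      have h4 : (2 * m + 1) * t ≤ 1 := by rwa [le_div_iff₀' hN] at ht
      calc (2 * m + 1) * φ ≤ (2 * m + 1) * (Real.pi / 2 * t) := by gcongr
        _ = Real.pi / 2 * ((2 * m + 1) * t) := by ring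
        _ ≤ Real.pi / 2 * 1 := by gcongr
        _ = _ := by ring
    have h5 := Real.mul_le_sin (by positivity : 0 ≤ (2 * m + 1) * φ) h3
    have h6 : t ≤ φ := by rw [← hφt]; exact Real.sin_le hφ0
    have h7 : (1:ℝ) / 2 ≤ 2 / Real.pi := by
      rw [div_le_div_iff₀ (by norm_num) hpi]; linarith [Real.pi_le_four]
    have h8 : t * ((2 * m + 1) / 2) ≤ t * |D.eval t| := by
      rw [abs_of_pos ht0] at hs
      rw [hs]
      calc t * ((2 * m + 1) / 2) = 1 / 2 * ((2 * m + 1) * t) := by ring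
        _ ≤ 2 / Real.pi * ((2 * m + 1) * φ) := by gcongr
        _ ≤ _ := h5
        _ ≤ _ := le_abs_self _
    exact le_of_mul_le_mul_left h8 ht0

open intervalIntegral in
/-- A nonnegative kernel whose mass on `a ≤ |t| ≤ 3` is at most `8 · 4 ^ (-(r + 1))` times its
mass on `[-a, a]`. In the tail, one factor `D (t / 4) ^ 2 ≤ 16 / t ^ 2` is kept for integration
rather than bounded by its maximum; without this the ratio would carry an extra factor `1 / a`. -/
theorem exists_kernel (m r : ℕ) (a : ℝ) (ha0 : 0 < a) (ha1 : a ≤ 1)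
    (ha : 16 ≤ a * (2 * m + 1)) :
    ∃ K : Polynomial ℝ, K.natDegree ≤ 2 * m * (2 * (r + 1)) ∧ (∀ t, 0 ≤ K.eval t) ∧
      0 < (∫ t in (-a)..a, K.eval t) ∧
      (∫ t in (-3)..(-a), K.eval t) + (∫ t in a..3, K.eval t)
        ≤ 8 * (1 / 4) ^ (r + 1) * ∫ t in (-a)..a, K.eval t := by
  obtain ⟨D, hdeg, hup, hlow⟩ := exists_peak m
  have hN : (0:ℝ) < 2 * m + 1 := by positivity
  set N : ℝ := 2 * m + 1 with hNdef
  set K : Polynomial ℝ := (D.comp (Polynomial.C (1 / 4) * Polynomial.X)) ^ (2 * (r + 1)) with hK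
  have hKe : ∀ t, K.eval t = |D.eval (t / 4)| ^ (2 * (r + 1)) := by
    intro t
    simp only [hK, Polynomial.eval_pow, Polynomial.eval_comp, Polynomial.eval_mul,
      Polynomial.eval_C, Polynomial.eval_X]
    rw [pow_mul, pow_mul, sq_abs, one_div_mul_eq_div]
  have hK0 : ∀ t, 0 ≤ K.eval t := fun t => by rw [hKe]; positivity
  have hint : ∀ u v : ℝ, IntervalIntegrable (fun t => K.eval t) MeasureTheory.volume u v :=
    fun u v => K.continuous.intervalIntegrable u v
  have hNa : 4 / N ≤ a := by rw [div_le_iff₀ hN]; linarith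
  have hmass : (4 / N) * (N / 2) ^ (2 * (r + 1)) ≤ ∫ t in (-a)..a, K.eval t := by
    calc (4 / N) * (N / 2) ^ (2 * (r + 1))
        = ∫ t in (0:ℝ)..(4 / N), (N / 2) ^ (2 * (r + 1)) := by simp
      _ ≤ ∫ t in (0:ℝ)..(4 / N), K.eval t := by
          refine integral_mono_on_of_le_Ioo (by positivity) (by simp) (hint _ _) ?_
          intro t ht
          rw [hKe]
          have : N / 2 ≤ |D.eval (t / 4)| := by
            refine hlow _ (by linarith [ht.1]) ?_
            have := ht.2
            rw [lt_div_iff₀ hN] at this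
            rw [le_div_iff₀ hN]; linarith
          gcongr
      _ ≤ ∫ t in (-a)..a, K.eval t :=
          integral_mono_interval (by linarith) (by positivity) hNa
            (Filter.Eventually.of_forall hK0) (hint _ _)
  have hpt : ∀ t : ℝ, a ≤ |t| → |t| ≤ 3 → K.eval t ≤ 16 * (4 / a) ^ (2 * r) * t ^ (-2 : ℤ) := by
    intro t h1 h2
    have ht : 0 < |t| := by linarith
    have h3 := hup (t / 4) (by rw [abs_div]; norm_num; linarith)
    have h4 : |D.eval (t / 4)| ≤ 4 / |t| := by
      rw [abs_div] at h3
      norm_num at h3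
      rw [le_div_iff₀ ht]; linarith
    have h5 : |D.eval (t / 4)| ≤ 4 / a := h4.trans (by gcongr)
    rw [hKe]
    calc |D.eval (t / 4)| ^ (2 * (r + 1))
        = |D.eval (t / 4)| ^ (2 * r) * |D.eval (t / 4)| ^ 2 := by ring
      _ ≤ (4 / a) ^ (2 * r) * (4 / |t|) ^ 2 := by gcongr
      _ = _ := by
        rw [div_pow 4 |t|, sq_abs, zpow_neg]
        norm_cast
        rw [div_eq_mul_inv]
        push_cast
        ring
  have hzp : ∀ u v : ℝ, (0:ℝ) ∉ Set.uIcc u v → IntervalIntegrable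
      (fun t : ℝ => 16 * (4 / a) ^ (2 * r) * t ^ (-2 : ℤ)) MeasureTheory.volume u v :=
    fun u v h => (intervalIntegrable_zpow (Or.inr h)).const_mul _
  have hpos : (0:ℝ) ∉ Set.uIcc a 3 := by
    rw [Set.uIcc_of_le (by linarith)]; intro h; linarith [h.1]
  have hneg : (0:ℝ) ∉ Set.uIcc (-3) (-a) := by
    rw [Set.uIcc_of_le (by linarith)]; intro h; linarith [h.2]
  have hA : (0:ℝ) ≤ 16 * (4 / a) ^ (2 * r) := by positivity
  have ht1 : ∫ t in a..3, K.eval t ≤ 16 * (4 / a) ^ (2 * r) * (1 / a) := by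
    calc ∫ t in a..3, K.eval t ≤ ∫ t in a..3, 16 * (4 / a) ^ (2 * r) * t ^ (-2 : ℤ) := by
          refine integral_mono_on (by linarith) (hint _ _) (hzp _ _ hpos) fun t ht => ?_
          have : |t| = t := abs_of_pos (by linarith [ht.1])
          exact hpt t (by rw [this]; exact ht.1) (by rw [this]; exact ht.2)
      _ ≤ _ := by
          rw [integral_const_mul, integral_zpow (Or.inr ⟨by norm_num, hpos⟩)]
          refine mul_le_mul_of_nonneg_left ?_ hA
          norm_num
          linarith
  have ht2 : ∫ t in (-3)..(-a), K.eval t ≤ 16 * (4 / a) ^ (2 * r) * (1 / a) := by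
    calc ∫ t in (-3)..(-a), K.eval t
        ≤ ∫ t in (-3)..(-a), 16 * (4 / a) ^ (2 * r) * t ^ (-2 : ℤ) := by
          refine integral_mono_on (by linarith) (hint _ _) (hzp _ _ hneg) fun t ht => ?_
          have : |t| = -t := abs_of_neg (by linarith [ht.2])
          exact hpt t (by rw [this]; linarith [ht.2]) (by rw [this]; linarith [ht.1])
      _ ≤ _ := by
          rw [integral_const_mul, integral_zpow (Or.inr ⟨by norm_num, hneg⟩)]
          refine mul_le_mul_of_nonneg_left ?_ hA
          norm_num [inv_neg]
          linarith
  refine ⟨K, ?_, hK0, lt_of_lt_of_le (by positivity) hmass, ?_⟩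
  · rw [hK]
    refine Polynomial.natDegree_pow_le.trans ?_
    rw [mul_comm]
    refine Nat.mul_le_mul_right _ (Polynomial.natDegree_comp_le.trans ?_)
    have : (Polynomial.C (1 / 4 : ℝ) * Polynomial.X).natDegree ≤ 1 :=
      (Polynomial.natDegree_C_mul_le _ _).trans Polynomial.natDegree_X_le
    nlinarith
  · have hq : 4 / a ≤ 1 / 2 * (N / 2) := by
      rw [div_le_iff₀ ha0]; nlinarith
    have hq' : 1 / a ≤ N / 16 := by
      rw [div_le_iff₀ ha0]; nlinarith
    calc _ ≤ 32 * (4 / a) ^ (2 * r) * (1 / a) := by linarith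
      _ ≤ 32 * (1 / 2 * (N / 2)) ^ (2 * r) * (N / 16) := by gcongr
      _ = 8 * (1 / 4) ^ (r + 1) * ((4 / N) * (N / 2) ^ (2 * (r + 1))) := by
        rw [mul_pow, pow_mul (1 / 2 : ℝ), pow_succ (1 / 4 : ℝ), mul_add, pow_add (N / 2)]
        field_simp
        norm_num
        ring
      _ ≤ _ := by gcongr

open Polynomial intervalIntegral in
/-- Convolving a weight with a polynomial gives a polynomial of no larger degree. -/
theorem exists_conv_poly (K : Polynomial ℝ) (w : ℝ → ℝ) (hw : Continuous w) (u v : ℝ) :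
    ∃ P : Polynomial ℝ, P.natDegree ≤ K.natDegree ∧
      ∀ x, P.eval x = ∫ y in u..v, w y * K.eval (x - y) := by
  refine ⟨∑ k ∈ Finset.range (K.natDegree + 1),
    C (∫ y in u..v, w y * (hasseDeriv k K).eval (-y)) * X ^ k, ?_, ?_⟩
  · refine natDegree_sum_le_of_forall_le _ _ fun k hk => ?_
    exact (natDegree_C_mul_X_pow_le _ _).trans (by simpa [Nat.lt_succ_iff] using hk)
  · intro x
    have h : ∀ y, w y * K.eval (x - y) = ∑ k ∈ Finset.range (K.natDegree + 1),
        w y * (hasseDeriv k K).eval (-y) * x ^ k := by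
      intro y
      have h1 : K.eval (x - y) = (taylor (-y) K).eval x := by
        rw [taylor_eval, sub_eq_add_neg]
      rw [h1, eval_eq_sum_range, natDegree_taylor, Finset.mul_sum]
      refine Finset.sum_congr rfl fun k _ => ?_
      rw [taylor_coeff]; ring
    simp_rw [h]
    rw [integral_finsetSum]
    · simp [eval_finsetSum, integral_mul_const]
    · intro k _
      refine Continuous.intervalIntegrable ?_ _ _
      have := (hasseDeriv k K).continuous
      fun_prop

open intervalIntegral in
/-- The approximant built from a kernel `K` whose tail mass, relative to `[-a, a]` with
`a = 1 / (4β)`, is at most `τ`. The factor `2` bounds `exp (1/4) ^ 2`: one factor `exp (1/4)`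
is the maximum of the truncated exponential, the other comes from the normalization. -/
theorem exists_approx (β τ : ℝ) (hβ : 1 ≤ β) (K : Polynomial ℝ) (hK0 : ∀ t, 0 ≤ K.eval t)
    (hpos : 0 < ∫ t in (-(1 / (4 * β)))..(1 / (4 * β)), K.eval t)
    (htail : (∫ t in (-3)..(-(1 / (4 * β))), K.eval t) + (∫ t in (1 / (4 * β))..3, K.eval t)
        ≤ τ * ∫ t in (-(1 / (4 * β)))..(1 / (4 * β)), K.eval t) :
    ∃ P : Polynomial ℝ, P.natDegree ≤ K.natDegree ∧
      (∀ x ∈ Set.Icc (-1:ℝ) 1, |P.eval x| ≤ 2 * (1 + τ)) ∧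
      (∀ x ∈ Set.Icc (-1:ℝ) 0, |P.eval x - Real.exp (β * x)| ≤ 2 * τ) := by
  have hb0 : 0 < β := by linarith
  set a : ℝ := 1 / (4 * β) with ha
  have ha0 : 0 < a := by positivity
  have ha1 : a ≤ 1 := by rw [ha, div_le_one (by positivity)]; linarith
  have hba : β * a = 1 / 4 := by rw [ha]; field_simp
  set E := Real.exp (1 / 4) with hE
  have hE0 : 0 < E := Real.exp_pos _
  have hE2 : E * E ≤ 2 := by
    have h1 : E * E * Real.exp (-(1 / 2)) = 1 := by
      rw [hE, ← Real.exp_add, ← Real.exp_add]; norm_num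
    have h2 := Real.add_one_le_exp (-(1 / 2) : ℝ)
    nlinarith [mul_pos hE0 hE0]
  set I := ∫ t in (-a)..a, K.eval t with hI
  set c := ∫ t in (-a)..a, Real.exp (-(β * t)) * K.eval t with hc
  have hKc := K.continuous
  have hint : ∀ u v : ℝ, IntervalIntegrable (fun t => K.eval t) MeasureTheory.volume u v :=
    fun u v => hKc.intervalIntegrable u v
  have hcI : I ≤ E * c := by
    rw [hc, ← integral_const_mul]
    refine integral_mono_on (by linarith) (hint _ _)
      (Continuous.intervalIntegrable (by fun_prop) _ _) fun t ht => ?_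
    rw [← mul_assoc, hE, ← Real.exp_add]
    refine le_mul_of_one_le_left (hK0 t) (Real.one_le_exp ?_)
    nlinarith [ht.2]
  have hc0 : 0 < c := by
    by_contra h
    push Not at h
    nlinarith
  obtain ⟨Q, hQd, hQ⟩ := exists_conv_poly K (fun y => Real.exp (β * y)) (by fun_prop) (-2) a
  have hgi : ∀ x u v : ℝ, IntervalIntegrable (fun t => Real.exp (β * (x - t)) * K.eval t)
      MeasureTheory.volume u v :=
    fun x u v => Continuous.intervalIntegrable (by fun_prop) _ _
  have hQ' : ∀ x, Q.eval x = ∫ t in (x - a)..(x + 2), Real.exp (β * (x - t)) * K.eval t := by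
    intro x
    rw [hQ]
    have := integral_comp_sub_left (a := -2) (b := a)
      (fun t => Real.exp (β * (x - t)) * K.eval t) x
    simp only [sub_sub_cancel, sub_neg_eq_add] at this
    exact this
  have hle : ∀ x u v, u ≤ v → x - a ≤ u →
      ∫ t in u..v, Real.exp (β * (x - t)) * K.eval t ≤ E * ∫ t in u..v, K.eval t := by
    intro x u v huv hu
    rw [← integral_const_mul]
    refine integral_mono_on huv (hgi _ _ _) ((hint _ _).const_mul _) fun t ht => ?_
    refine mul_le_mul_of_nonneg_right (Real.exp_le_exp.2 ?_) (hK0 t)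
    nlinarith [ht.1]
  have hnn : ∀ x u v, u ≤ v → 0 ≤ ∫ t in u..v, Real.exp (β * (x - t)) * K.eval t :=
    fun x u v huv => integral_nonneg huv fun t _ => mul_nonneg (Real.exp_pos _).le (hK0 t)
  have hmono : ∀ u v u' v', u' ≤ u → u ≤ v → v ≤ v' →
      ∫ t in u..v, K.eval t ≤ ∫ t in u'..v', K.eval t :=
    fun u v u' v' h1 h2 h3 => integral_mono_interval h1 h2 h3
      (Filter.Eventually.of_forall hK0) (hint _ _)
  have hPe : ∀ x, (Polynomial.C c⁻¹ * Q).eval x = Q.eval x / c := by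
    intro x
    rw [Polynomial.eval_mul, Polynomial.eval_C]; field_simp
  have hτ : 0 ≤ τ := by
    have h1 : 0 ≤ ∫ t in (-3)..(-a), K.eval t := integral_nonneg (by linarith) fun t _ => hK0 t
    have h2 : 0 ≤ ∫ t in a..3, K.eval t := integral_nonneg (by linarith) fun t _ => hK0 t
    by_contra h
    push Not at h
    nlinarith
  have hscale : ∀ s, 0 ≤ s → E * (s * I) ≤ 2 * s * c := by
    intro s hs
    calc E * (s * I) ≤ E * (s * (E * c)) := by gcongr
      _ = (E * E) * (s * c) := by ring
      _ ≤ 2 * (s * c) := by gcongr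
      _ = _ := by ring
  refine ⟨Polynomial.C c⁻¹ * Q, (Polynomial.natDegree_C_mul_le _ _).trans hQd, ?_, ?_⟩
  · intro x hx
    obtain ⟨hx1, hx2⟩ := hx
    rw [hPe, abs_of_nonneg (div_nonneg (by rw [hQ']; exact hnn _ _ _ (by linarith)) hc0.le),
      div_le_iff₀ hc0, hQ']
    have hsplit : ∫ t in (-3)..3, K.eval t
        = (∫ t in (-3)..(-a), K.eval t) + I + ∫ t in a..3, K.eval t := by
      rw [hI, integral_add_adjacent_intervals (hint _ _) (hint _ _),
        integral_add_adjacent_intervals (hint _ _) (hint _ _)]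
    calc _ ≤ E * ∫ t in (x - a)..(x + 2), K.eval t := hle _ _ _ (by linarith) le_rfl
      _ ≤ E * ∫ t in (-3)..3, K.eval t := by
        gcongr
        exact hmono _ _ _ _ (by linarith) (by linarith) (by linarith)
      _ ≤ E * ((1 + τ) * I) := by
        gcongr
        linarith
      _ ≤ _ := hscale _ (by linarith)
  · intro x hx
    obtain ⟨hx1, hx2⟩ := hx
    have hmid : ∫ t in (-a)..a, Real.exp (β * (x - t)) * K.eval t = Real.exp (β * x) * c := by
      rw [hc, ← integral_const_mul]
      congr 1
      ext t
      rw [← mul_assoc, ← Real.exp_add]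
      ring_nf
    have hsplit : Q.eval x = (∫ t in (x - a)..(-a), Real.exp (β * (x - t)) * K.eval t)
        + Real.exp (β * x) * c + ∫ t in a..(x + 2), Real.exp (β * (x - t)) * K.eval t := by
      rw [hQ', ← hmid, integral_add_adjacent_intervals (hgi _ _ _) (hgi _ _ _),
        integral_add_adjacent_intervals (hgi _ _ _) (hgi _ _ _)]
    have hl0 := hnn x (x - a) (-a) (by linarith)
    have hr0 := hnn x a (x + 2) (by linarith)
    have hl := hle x (x - a) (-a) (by linarith) le_rfl
    have hr := hle x a (x + 2) (by linarith) (by linarith)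
    have hl' := hmono (x - a) (-a) (-3) (-a) (by linarith) (by linarith) le_rfl
    have hr' := hmono a (x + 2) a 3 le_rfl (by linarith) (by linarith)
    have hdiff : (Polynomial.C c⁻¹ * Q).eval x - Real.exp (β * x)
        = ((∫ t in (x - a)..(-a), Real.exp (β * (x - t)) * K.eval t)
        + ∫ t in a..(x + 2), Real.exp (β * (x - t)) * K.eval t) / c := by
      rw [hPe, hsplit]
      field_simp
      ring
    rw [hdiff, abs_of_nonneg (div_nonneg (by linarith) hc0.le), div_le_iff₀ hc0]
    calc _ ≤ E * ((∫ t in (x - a)..(-a), K.eval t) + ∫ t in a..(x + 2), K.eval t) := by linarith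
      _ ≤ E * (τ * I) := by
        gcongr
        linarith
      _ ≤ _ := hscale τ hτ

/-- Bounded polynomial approximation of `exp(βx)` on `[-1, 0]`: there is
an absolute constant `c > 0` such that for all `β ≥ 1` and `ξ ∈ (0, 1/10]` there is a real
polynomial of degree at most `c β log(1/ξ)` bounded by `3` on `[-1,1]` which is `ξ`-close
to `exp(βx)` on `[-1,0]`. -/
theorem stmt8 : ∃ c : ℝ, 0 < c ∧
    ∀ β ξ : ℝ, 1 ≤ β → ξ ∈ Set.Ioc (0:ℝ) (1/10) →
    ∃ P : Polynomial ℝ,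
      (P.natDegree : ℝ) ≤ c * β * Real.log (1 / ξ) ∧
      (∀ x ∈ Set.Icc (-1:ℝ) 1, |P.eval x| ≤ 3) ∧
      (∀ x ∈ Set.Icc (-1:ℝ) 0, |P.eval x - Real.exp (β * x)| ≤ ξ) := by
  refine ⟨660, by norm_num, fun β ξ hβ hξ => ?_⟩
  obtain ⟨hξ0, hξ1⟩ := hξ
  have hb0 : 0 < β := by linarith
  set L := Real.log (1 / ξ) with hL
  have hexpL : Real.exp (-L) = ξ := by
    rw [hL, one_div, Real.log_inv, neg_neg, Real.exp_log hξ0]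
  have hL1 : 1 ≤ L := by
    rw [hL, Real.le_log_iff_exp_le (by positivity), le_div_iff₀ hξ0]
    nlinarith [Real.exp_one_lt_d9]
  -- `32 β` gives `(2 m + 1) / (4 β) ≥ 16`, and `3 log (1 / ξ)` gives `4 ^ (-r) ≤ ξ ^ 3 ≤ ξ / 100`.
  set m := ⌈32 * β⌉₊ with hm
  set r := ⌈3 * L⌉₊ with hr
  have hm1 : 32 * β ≤ m := Nat.le_ceil _
  have hm2 : (m:ℝ) < 32 * β + 1 := Nat.ceil_lt_add_one (by positivity)
  have hr1 : 3 * L ≤ r := Nat.le_ceil _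
  have hr2 : (r:ℝ) < 3 * L + 1 := Nat.ceil_lt_add_one (by positivity)
  have ha1 : 1 / (4 * β) ≤ 1 := by rw [div_le_one (by positivity)]; linarith
  obtain ⟨K, hKd, hK0, hKpos, hKt⟩ := exists_kernel m r (1 / (4 * β)) (by positivity) ha1 (by
    rw [one_div, inv_mul_eq_div, le_div_iff₀ (by positivity)]; linarith)
  obtain ⟨P, hPd, hP1, hP2⟩ := exists_approx β _ hβ K hK0 hKpos hKt
  have hτ : 8 * (1 / 4 : ℝ) ^ (r + 1) ≤ ξ / 2 := by
    have h1 : (1 / 4 : ℝ) ^ r ≤ ξ ^ 3 := by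
      have h2 : (1 / 4 : ℝ) ≤ Real.exp (-1) := by
        rw [Real.exp_neg, one_div]
        exact inv_anti₀ (Real.exp_pos 1) (by linarith [Real.exp_one_lt_d9])
      calc (1 / 4 : ℝ) ^ r ≤ Real.exp (-1) ^ r := by gcongr
        _ = Real.exp (-r) := by rw [← Real.exp_nat_mul]; ring_nf
        _ ≤ Real.exp (3 * (-L)) := Real.exp_le_exp.2 (by linarith)
        _ = ξ ^ 3 := by
          rw [← hexpL, ← Real.exp_nat_mul]; norm_num
    have h3 : ξ ^ 3 ≤ ξ / 100 := by nlinarith [mul_pos hξ0 hξ0]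
    rw [pow_succ]
    linarith
  refine ⟨P, ?_, fun x hx => (hP1 x hx).trans (by linarith), fun x hx =>
    (hP2 x hx).trans (by linarith)⟩
  have hd : (P.natDegree : ℝ) ≤ 2 * m * (2 * (r + 1)) := by exact_mod_cast hPd.trans hKd
  calc (P.natDegree : ℝ) ≤ 2 * m * (2 * (r + 1)) := hd
    _ ≤ 2 * (33 * β) * (2 * (5 * L)) := by
      gcongr
      · linarith
      · linarith
    _ = 660 * β * L := by ring
end
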